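/- arXiv:2209.12718 — 3 statements merged into one kernel-verified Lean document; each statement's English description precedes it below -/
import Mathlib

section
/- Let (R, m) be a Noetherian local ring. Then R satisfies (SAC) if and only if the m-adic completion R̂ satisfies (SAC). -/
open CategoryTheory

/-- The `i`-th Ext group of `R`-modules `M` and `N`. -/
noncomputable abbrev ExtGroup (R : Type) [CommRing R] (M N : ModuleCat.{0} R) (i : ℕ) : Type :=
  (((Ext R (ModuleCat.{0} R) i).obj (Opposite.op M)).obj N)

/-- The symmetric Auslander condition (SAC): for every finitely generated `R`-module `M`,
if `Ext^i(M,R) = 0` for all `i > 0` and `Ext^i(M,M) = 0` for `i ≫ 0`,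
then `Ext^i(M,M) = 0` for all `i > 0`. -/
def SAC (R : Type) [CommRing R] : Prop :=
  ∀ M : ModuleCat.{0} R, Module.Finite R M →
    (∀ i : ℕ, 0 < i → Subsingleton (ExtGroup R M (ModuleCat.of R R) i)) →
    (∃ N : ℕ, ∀ i : ℕ, N < i → Subsingleton (ExtGroup R M M i)) →
    ∀ i : ℕ, 0 < i → Subsingleton (ExtGroup R M M i)


theorem sac_bridge {R : Type} [CommRing R] (M N : ModuleCat.{0} R) (n : ℕ) :
    Subsingleton (ExtGroup R M N (n+1)) ↔ Subsingleton (Abelian.Ext M N (n+1)) := by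
  let P := projectiveResolution M
  have h1 : Subsingleton (ExtGroup R M N (n+1)) ↔
      ∀ f : P.complex.X (n+1) ⟶ N, P.complex.d (n+2) (n+1) ≫ f = 0 →
        ∃ g : P.complex.X n ⟶ N, P.complex.d (n+1) n ≫ g = f := by
    rw [← ModuleCat.isZero_iff_subsingleton, (P.isoExt (R := R) (n+1) N).isZero_iff,
      ← HomologicalComplex.exactAt_iff_isZero_homology,
      HomologicalComplex.exactAt_iff' _ n (n+1) (n+2) (by simp) (by simp),
      ShortComplex.moduleCat_exact_iff]
    rfl
  rw [h1]
  constructor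
  · intro h
    refine subsingleton_of_forall_eq 0 fun a => ?_
    obtain ⟨f, hf, rfl⟩ := P.extMk_surjective a (n+2) rfl
    rw [P.extMk_eq_zero_iff _ _ _ _ n rfl]
    exact h f hf
  · intro h f hf
    rw [← P.extMk_eq_zero_iff _ _ rfl hf n rfl]
    exact Subsingleton.elim _ _

open Abelian

/-- LES consequences -/
theorem sac_ext_shift {R : Type} [CommRing R] {S : ShortComplex (ModuleCat.{0} R)} (hS : S.ShortExact)
    (N : ModuleCat.{0} R) (n : ℕ) [Projective S.X₂] :
    Subsingleton (Abelian.Ext S.X₃ N (n+2)) ↔ Subsingleton (Abelian.Ext S.X₁ N (n+1)) := by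
  constructor
  · intro h
    refine subsingleton_of_forall_eq 0 fun a => ?_
    obtain ⟨b, rfl⟩ := Ext.contravariant_sequence_exact₁ hS N a (n₁ := n+2) (by lia)
      (Subsingleton.elim _ _)
    rw [Ext.eq_zero_of_projective b, Ext.comp_zero]
  · intro h
    refine subsingleton_of_forall_eq 0 fun a => ?_
    obtain ⟨b, rfl⟩ := Ext.contravariant_sequence_exact₃ hS N a (n₀ := n+1)
      (Ext.eq_zero_of_projective _) (by lia)
    rw [Subsingleton.elim b 0, Ext.comp_zero]

theorem sac_ext_one {R : Type} [CommRing R] {S : ShortComplex (ModuleCat.{0} R)} (hS : S.ShortExact)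
    (N : ModuleCat.{0} R) [Projective S.X₂] :
    Subsingleton (Abelian.Ext S.X₃ N 1) ↔ ∀ f : S.X₁ ⟶ N, ∃ g : S.X₂ ⟶ N, S.f ≫ g = f := by
  constructor
  · intro h f
    obtain ⟨b, hb⟩ := Ext.contravariant_sequence_exact₁ hS N (Ext.mk₀ f) (n₁ := 1) (by lia)
      (Subsingleton.elim _ _)
    obtain ⟨g, rfl⟩ := (Ext.mk₀_bijective _ _).2 b
    refine ⟨g, (Ext.mk₀_bijective _ _).1 ?_⟩
    rw [← hb, Ext.mk₀_comp_mk₀]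
  · intro h
    refine subsingleton_of_forall_eq 0 fun a => ?_
    obtain ⟨b, rfl⟩ := Ext.contravariant_sequence_exact₃ hS N a (n₀ := 0)
      (Ext.eq_zero_of_projective _) (by lia)
    obtain ⟨f, rfl⟩ := (Ext.mk₀_bijective _ _).2 b
    obtain ⟨g, rfl⟩ := h f
    rw [← Ext.mk₀_comp_mk₀, ← Ext.comp_assoc_of_second_deg_zero,
      ShortComplex.ShortExact.extClass_comp, Ext.zero_comp]

open TensorProduct

section
variable {A : Type} [CommRing A] {K P M : Type} [AddCommGroup K] [Module A K] [AddCommGroup P]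
  [Module A P] [AddCommGroup M] [Module A M]

theorem sac_mod_shortExact (i : K →ₗ[A] P) (p : P →ₗ[A] M) (hi : Function.Injective i)
    (hex : Function.Exact i p) (hp : Function.Surjective p) :
    (ModuleCat.shortComplexOfCompEqZero i p hex.linearMap_comp_eq_zero).ShortExact :=
  ModuleCat.shortComplex_shortExact _ hex hi hp

theorem sac_mod_shift [Module.Projective A P] (i : K →ₗ[A] P) (p : P →ₗ[A] M)
    (hi : Function.Injective i)
    (hex : Function.Exact i p) (hp : Function.Surjective p) (N : Type) [AddCommGroup N] [Module A N]
    (n : ℕ) : Subsingleton (Abelian.Ext (ModuleCat.of A M) (ModuleCat.of A N) (n+2)) ↔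
      Subsingleton (Abelian.Ext (ModuleCat.of A K) (ModuleCat.of A N) (n+1)) := by
  have h := sac_mod_shortExact i p hi hex hp
  have : Projective (ModuleCat.shortComplexOfCompEqZero i p hex.linearMap_comp_eq_zero).X₂ :=
    inferInstanceAs (Projective (ModuleCat.of A P))
  exact sac_ext_shift h (ModuleCat.of A N) n

theorem sac_mod_one [Module.Projective A P] (i : K →ₗ[A] P) (p : P →ₗ[A] M)
    (hi : Function.Injective i)
    (hex : Function.Exact i p) (hp : Function.Surjective p) (N : Type) [AddCommGroup N] [Module A N] :
    Subsingleton (Abelian.Ext (ModuleCat.of A M) (ModuleCat.of A N) 1) ↔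
      Function.Surjective (LinearMap.lcomp A N i) := by
  have h := sac_mod_shortExact i p hi hex hp
  have : Projective (ModuleCat.shortComplexOfCompEqZero i p hex.linearMap_comp_eq_zero).X₂ :=
    inferInstanceAs (Projective (ModuleCat.of A P))
  refine (sac_ext_one h (ModuleCat.of A N)).trans ⟨fun H f => ?_, fun H f => ?_⟩
  · obtain ⟨g, hg⟩ := H (ModuleCat.ofHom f)
    exact ⟨g.hom, congrArg ModuleCat.Hom.hom hg⟩
  · obtain ⟨g, hg⟩ := H f.hom
    exact ⟨ModuleCat.ofHom g, ModuleCat.hom_ext hg⟩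

end

theorem sac_baseChange_hom {A B : Type} [CommRing A] [CommRing B] [Algebra A B]
    [IsNoetherianRing A]
    [Module.FaithfullyFlat A B] {K P : Type} (N : Type) [AddCommGroup K] [Module A K]
    [AddCommGroup P] [Module A P] [AddCommGroup N] [Module A N] [Module.Finite A K]
    [Module.Finite A P] (i : K →ₗ[A] P) :
    Function.Surjective (LinearMap.lcomp A N i) ↔
      Function.Surjective (LinearMap.lcomp B (B ⊗[A] N) (i.baseChange B)) := by
  have : Module.FinitePresentation A K := Module.finitePresentation_of_finite A K
  have : Module.FinitePresentation A P := Module.finitePresentation_of_finite A P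
  rw [← Module.FaithfullyFlat.lTensor_surjective_iff_surjective A B]
  let eP := (Module.FinitePresentation.isBaseChange_map A P N B).equiv
  let eK := (Module.FinitePresentation.isBaseChange_map A K N B).equiv
  have key : ∀ t, LinearMap.lcomp B (B ⊗[A] N) (i.baseChange B) (eP t) =
      eK ((LinearMap.lcomp A N i).lTensor B t) := by
    intro t
    induction t with
    | zero => simp
    | add x y hx hy => simp only [map_add, hx, hy]
    | tmul b f =>
      simp only [eP, eK, IsBaseChange.equiv_tmul, LinearMap.lTensor_tmul, map_smul]
      congr 1
      ext
      simp
  constructor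
  · intro h f
    obtain ⟨t, ht⟩ := h (eK.symm f)
    exact ⟨eP t, by rw [key, ht]; simp⟩
  · intro h t
    obtain ⟨f, hf⟩ := h (eK t)
    refine ⟨eP.symm f, eK.injective ?_⟩
    rw [← key, ← hf]; simp

theorem sac_baseChange_ext {A B : Type} [CommRing A] [CommRing B] [Algebra A B]
    [IsNoetherianRing A] [Module.FaithfullyFlat A B] (N : Type) [AddCommGroup N] [Module A N]
    (n : ℕ) : ∀ (M : Type) [AddCommGroup M] [Module A M] [Module.Finite A M],
    Subsingleton (Abelian.Ext (ModuleCat.of A M) (ModuleCat.of A N) (n+1)) ↔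
    Subsingleton (Abelian.Ext (ModuleCat.of B (B ⊗[A] M)) (ModuleCat.of B (B ⊗[A] N)) (n+1)) := by
  induction n with
  | zero =>
    intro M _ _ _
    obtain ⟨k, p, hp⟩ := Module.Finite.exists_fin' A M
    have hex : Function.Exact (LinearMap.ker p).subtype p := LinearMap.exact_subtype_ker_map p
    have hi := (LinearMap.ker p).injective_subtype
    rw [zero_add, sac_mod_one _ p hi hex hp, sac_mod_one ((LinearMap.ker p).subtype.baseChange B) (p.baseChange B)
      (Module.Flat.lTensor_preserves_injective_linearMap (M := B) _ hi) (lTensor_exact B hex hp)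
      (LinearMap.lTensor_surjective B hp)]
    exact sac_baseChange_hom N _
  | succ n ih =>
    intro M _ _ _
    obtain ⟨k, p, hp⟩ := Module.Finite.exists_fin' A M
    have hex : Function.Exact (LinearMap.ker p).subtype p := LinearMap.exact_subtype_ker_map p
    have hi := (LinearMap.ker p).injective_subtype
    rw [sac_mod_shift _ p hi hex hp, sac_mod_shift ((LinearMap.ker p).subtype.baseChange B) (p.baseChange B)
      (Module.Flat.lTensor_preserves_injective_linearMap (M := B) _ hi) (lTensor_exact B hex hp)
      (LinearMap.lTensor_surjective B hp)]
    exact ih _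

theorem sac_iff (R : Type) [CommRing R] : SAC R ↔ ∀ (M : Type) [AddCommGroup M] [Module R M]
    [Module.Finite R M],
    (∀ i : ℕ, Subsingleton (Abelian.Ext (ModuleCat.of R M) (ModuleCat.of R R) (i+1))) →
    (∃ N : ℕ, ∀ i : ℕ, N ≤ i →
      Subsingleton (Abelian.Ext (ModuleCat.of R M) (ModuleCat.of R M) (i+1))) →
    ∀ i : ℕ, Subsingleton (Abelian.Ext (ModuleCat.of R M) (ModuleCat.of R M) (i+1)) := by
  constructor
  · intro h M _ _ _ h1 h2 i
    rw [← sac_bridge]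
    refine h (ModuleCat.of R M) ‹_› ?_ ?_ _ (Nat.succ_pos i)
    · rintro (_ | i) hi
      · lia
      · rw [sac_bridge]; exact h1 i
    · obtain ⟨N, hN⟩ := h2
      refine ⟨N, ?_⟩
      rintro (_ | i) hi
      · lia
      · rw [sac_bridge]; exact hN i (by lia)
  · rintro h M hM h1 ⟨N, hN⟩ i hi
    obtain _ | i := i
    · lia
    rw [sac_bridge]
    refine h M (fun i => ?_) ⟨N, fun i hi => ?_⟩ i
    · exact (sac_bridge _ _ _).1 (h1 (i+1) (by lia))
    · exact (sac_bridge _ _ _).1 (hN (i+1) (by lia))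

theorem sac_ext_iso {R : Type} [CommRing R] {M M' N N' : ModuleCat.{0} R} (e : M ≅ M') (f : N ≅ N')
    (n : ℕ) (h : Subsingleton (Abelian.Ext M N n)) : Subsingleton (Abelian.Ext M' N' n) := by
  refine subsingleton_of_forall_eq 0 fun a => ?_
  have h0 : ((Ext.mk₀ e.hom).comp a (zero_add n)).comp (Ext.mk₀ f.inv) (add_zero n) = 0 :=
    Subsingleton.elim _ _
  have h1 : (Ext.mk₀ e.inv).comp ((((Ext.mk₀ e.hom).comp a (zero_add n)).comp
    (Ext.mk₀ f.inv) (add_zero n)).comp (Ext.mk₀ f.hom) (add_zero n)) (zero_add n) = a := by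
    simp
  rw [← h1, h0]; simp

/-- Faithfully flat descent of (SAC). -/
theorem sac_descent {A B : Type} [CommRing A] [CommRing B] [Algebra A B]
    [IsNoetherianRing A] [Module.FaithfullyFlat A B] (h : SAC B) : SAC A := by
  rw [sac_iff] at h ⊢
  rintro M _ _ _ h1 ⟨k, h2⟩ i
  rw [sac_baseChange_ext (B := B)]
  refine h _ (fun i => ?_) ⟨k, fun i hi => ?_⟩ i
  · have := (sac_baseChange_ext (B := B) A i M).1 (h1 i)
    exact sac_ext_iso (Iso.refl _) (AlgebraTensorModule.rid A B B).toModuleIso _ this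
  · exact (sac_baseChange_ext M i M).1 (h2 i hi)

section
variable {B : Type} [CommRing B] {S : ShortComplex (ModuleCat.{0} B)} (hS : S.ShortExact)
include hS

theorem sac_G1 (N : ModuleCat.{0} B) (n : ℕ) (h1 : Subsingleton (Abelian.Ext S.X₁ N n))
    (h3 : Subsingleton (Abelian.Ext S.X₃ N n)) : Subsingleton (Abelian.Ext S.X₂ N n) := by
  refine subsingleton_of_forall_eq 0 fun a => ?_
  obtain ⟨b, rfl⟩ := Ext.contravariant_sequence_exact₂ hS N a (Subsingleton.elim _ _)
  rw [Subsingleton.elim b 0, Ext.comp_zero]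

theorem sac_G2 (N : ModuleCat.{0} B) (n : ℕ) (h2 : Subsingleton (Abelian.Ext S.X₂ N n))
    (h3 : Subsingleton (Abelian.Ext S.X₃ N (n+1))) : Subsingleton (Abelian.Ext S.X₁ N n) := by
  refine subsingleton_of_forall_eq 0 fun a => ?_
  obtain ⟨b, rfl⟩ := Ext.contravariant_sequence_exact₁ hS N a (add_comm 1 n)
    (Subsingleton.elim _ _)
  rw [Subsingleton.elim b 0, Ext.comp_zero]

theorem sac_C1 (Y : ModuleCat.{0} B) (n : ℕ) (h1 : Subsingleton (Abelian.Ext Y S.X₁ n))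
    (h3 : Subsingleton (Abelian.Ext Y S.X₃ n)) : Subsingleton (Abelian.Ext Y S.X₂ n) := by
  refine subsingleton_of_forall_eq 0 fun a => ?_
  obtain ⟨b, rfl⟩ := Ext.covariant_sequence_exact₂ Y hS a (Subsingleton.elim _ _)
  rw [Subsingleton.elim b 0, Ext.zero_comp]

theorem sac_C2 (Y : ModuleCat.{0} B) (n : ℕ) (h3 : Subsingleton (Abelian.Ext Y S.X₃ n))
    (h2 : Subsingleton (Abelian.Ext Y S.X₂ (n+1))) : Subsingleton (Abelian.Ext Y S.X₁ (n+1)) := by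
  refine subsingleton_of_forall_eq 0 fun a => ?_
  obtain ⟨b, rfl⟩ := Ext.covariant_sequence_exact₁ Y hS a (Subsingleton.elim _ _) rfl
  rw [Subsingleton.elim b 0, Ext.zero_comp]
end

theorem sac_ext_free {B : Type} [CommRing B] (F : Type) [AddCommGroup F] [Module B F]
    [Module.Free B F] [Module.Finite B F] (X : ModuleCat.{0} B) (n : ℕ)
    (h : Subsingleton (Abelian.Ext X (ModuleCat.of B B) n)) :
    Subsingleton (Abelian.Ext X (ModuleCat.of B F) n) := by
  classical
  refine subsingleton_of_forall_eq 0 fun a => ?_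
  let b := Module.Free.chooseBasis B F
  have hid : 𝟙 (ModuleCat.of B F) = ∑ j, ModuleCat.ofHom (b.coord j) ≫
      ModuleCat.ofHom (LinearMap.toSpanSingleton B F (b j)) := by
    ext v
    simp only [ModuleCat.hom_id, LinearMap.id_coe, id_eq, ModuleCat.hom_sum, ModuleCat.hom_comp,
      ModuleCat.hom_ofHom, LinearMap.coe_sum, Finset.sum_apply, LinearMap.coe_comp,
      Function.comp_apply, LinearMap.toSpanSingleton_apply]
    exact (b.sum_repr v).symm
  have key : ∀ s : Finset (Module.Free.ChooseBasisIndex B F),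
      a.comp (Ext.mk₀ (∑ j ∈ s, ModuleCat.ofHom (b.coord j) ≫
      ModuleCat.ofHom (LinearMap.toSpanSingleton B F (b j)))) (add_zero n) = 0 := by
    intro s
    induction s using Finset.induction_on with
    | empty => simp
    | insert j s hj ih =>
      rw [Finset.sum_insert hj, Ext.mk₀_add, Ext.comp_add, ih, ← Ext.mk₀_comp_mk₀,
        ← Ext.comp_assoc_of_third_deg_zero,
        Subsingleton.elim (a.comp (Ext.mk₀ (ModuleCat.ofHom (b.coord j))) (add_zero n)) 0]
      simp
  rw [← Ext.comp_mk₀_id a, hid, key]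

theorem sac_nakayama {B : Type} [CommRing B] (E : Type) [AddCommGroup E] [Module B E]
    [Module.Finite B E] (x : B) (hx : x ∈ Ideal.jacobson (⊥ : Ideal B))
    (h : ∀ y : E, ∃ z : E, y = x • z) : Subsingleton E := by
  have : (⊤ : Submodule B E) = ⊥ := by
    refine Submodule.eq_bot_of_le_smul_of_le_jacobson_bot (Ideal.span {x}) ⊤ Module.Finite.fg_top
      (fun y _ => ?_) ?_
    · obtain ⟨z, rfl⟩ := h y
      exact Submodule.smul_mem_smul (Ideal.mem_span_singleton_self x) trivial
    · rwa [Ideal.span_singleton_le_iff_mem]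
  exact (Submodule.subsingleton_iff B).1 (subsingleton_of_bot_eq_top this.symm)

section
variable {B : Type} [CommRing B] [IsNoetherianRing B] {X F M : Type} [AddCommGroup X] [Module B X]
  [AddCommGroup F] [Module B F] [AddCommGroup M] [Module B M] [Module.Free B F]
  [Module.Finite B F] [Module.Finite B M] [Module.Finite B X]
  (x : B) (π : F →ₗ[B] M) (i : X →ₗ[B] F × M)
  (hi : Function.Injective i)
  (hex : Function.Exact i (π ∘ₗ LinearMap.fst B F M - x • LinearMap.snd B F M))
  (hs : Function.Surjective (π ∘ₗ LinearMap.fst B F M - x • LinearMap.snd B F M))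
include hi hex hs

omit [IsNoetherianRing B] [Module.Finite B X] [Module.Finite B M] in
theorem sac_step_up_R
    (h1 : ∀ i : ℕ, Subsingleton (Abelian.Ext (ModuleCat.of B M) (ModuleCat.of B B) (i+1))) :
    ∀ i : ℕ, Subsingleton (Abelian.Ext (ModuleCat.of B X) (ModuleCat.of B B) (i+1)) := by
  intro n
  have hS := sac_mod_shortExact _ _ hi hex hs
  have hS' := sac_mod_shortExact (LinearMap.inl B F M) (LinearMap.snd B F M)
    LinearMap.inl_injective .inl_snd LinearMap.snd_surjective
  refine sac_G2 hS (ModuleCat.of B B) _ (sac_G1 hS' _ _ ?_ (h1 n)) (h1 (n+1))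
  exact subsingleton_of_forall_eq 0 fun a =>
    Ext.eq_zero_of_projective (P := ModuleCat.of B F) a

omit [IsNoetherianRing B] [Module.Finite B X] [Module.Finite B M] in
theorem sac_step_up
    (h1 : ∀ i : ℕ, Subsingleton (Abelian.Ext (ModuleCat.of B M) (ModuleCat.of B B) (i+1)))
    (k : ℕ) (h2 : ∀ i : ℕ, k ≤ i →
      Subsingleton (Abelian.Ext (ModuleCat.of B M) (ModuleCat.of B M) (i+1))) (n : ℕ)
    (hn : k + 1 ≤ n) :
    Subsingleton (Abelian.Ext (ModuleCat.of B X) (ModuleCat.of B X) (n+1)) := by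
  have hR := sac_step_up_R x π i hi hex hs h1
  have hS := sac_mod_shortExact _ _ hi hex hs
  have hS' := sac_mod_shortExact (LinearMap.inl B F M) (LinearMap.snd B F M)
    LinearMap.inl_injective .inl_snd LinearMap.snd_surjective
  have h3 : ∀ n, k ≤ n →
      Subsingleton (Abelian.Ext (ModuleCat.of B X) (ModuleCat.of B M) (n+1)) := by
    intro n hn
    refine sac_G2 hS (ModuleCat.of B M) _ (sac_G1 hS' _ _ ?_ (h2 n hn)) (h2 (n+1) (by lia))
    exact subsingleton_of_forall_eq 0 fun a =>
      Ext.eq_zero_of_projective (P := ModuleCat.of B F) a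
  obtain _ | n := n
  · lia
  exact sac_C2 hS (ModuleCat.of B X) (n+1) (h3 n (by lia))
    (sac_C1 hS' _ _ (sac_ext_free F _ _ (hR (n+1))) (h3 (n+1) (by lia)))

theorem sac_step_down (hx : x ∈ Ideal.jacobson (⊥ : Ideal B))
    (h1 : ∀ i : ℕ, Subsingleton (Abelian.Ext (ModuleCat.of B M) (ModuleCat.of B B) (i+1)))
    (h2 : ∀ i : ℕ, Subsingleton (Abelian.Ext (ModuleCat.of B X) (ModuleCat.of B X) (i+1)))
    (n : ℕ) :
    Subsingleton (Abelian.Ext (ModuleCat.of B M) (ModuleCat.of B M) (n+1)) := by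
  have hR := sac_step_up_R x π i hi hex hs h1
  have hS := sac_mod_shortExact _ _ hi hex hs
  have hg : ModuleCat.ofHom (π ∘ₗ LinearMap.fst B F M - x • LinearMap.snd B F M) =
    ModuleCat.ofHom (LinearMap.fst B F M) ≫ ModuleCat.ofHom π +
      -(x • ModuleCat.ofHom (LinearMap.snd B F M)) := by
    rw [← sub_eq_add_neg]; rfl
  have h3 : Subsingleton (Abelian.Ext (ModuleCat.of B X) (ModuleCat.of B M) (n+1)) := by
    refine sac_nakayama _ x hx fun y => ?_
    obtain ⟨z, hz⟩ := Ext.covariant_sequence_exact₃ (ModuleCat.of B X) hS y rfl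
      (@Subsingleton.elim _ (h2 (n+1)) _ _)
    change z.comp (Ext.mk₀ (ModuleCat.ofHom
      (π ∘ₗ LinearMap.fst B F M - x • LinearMap.snd B F M))) (add_zero _) = y at hz
    have hF := sac_ext_free F _ _ (hR n)
    refine ⟨-(z.comp (Ext.mk₀ (ModuleCat.ofHom (LinearMap.snd B F M))) (add_zero _)), ?_⟩
    rw [← hz, hg, Ext.mk₀_add, Ext.comp_add, ← Ext.mk₀_comp_mk₀,
        ← Ext.comp_assoc_of_third_deg_zero,
        Subsingleton.elim (z.comp (Ext.mk₀ (ModuleCat.ofHom (LinearMap.fst B F M))) (add_zero _)) 0]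
    simp [Ext.mk₀_smul, Ext.mk₀_neg]
  refine sac_nakayama _ x hx fun y => ?_
  obtain ⟨w, hw⟩ := Ext.contravariant_sequence_exact₂ hS (ModuleCat.of B M)
    ((Ext.mk₀ (ModuleCat.ofHom (LinearMap.snd B F M))).comp y (zero_add _))
    (@Subsingleton.elim _ h3 _ _)
  change (Ext.mk₀ (ModuleCat.ofHom
      (π ∘ₗ LinearMap.fst B F M - x • LinearMap.snd B F M))).comp w (zero_add _) = _ at hw
  have hw' := congrArg (fun t => (Ext.mk₀ (ModuleCat.ofHom (LinearMap.inr B F M))).comp t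
    (zero_add _)) hw
  simp only [Ext.mk₀_comp_mk₀_assoc] at hw'
  have e1 : ModuleCat.ofHom (LinearMap.inr B F M) ≫ ModuleCat.ofHom (LinearMap.snd B F M) =
    𝟙 (ModuleCat.of B M) := by ext; simp
  have e2 : ModuleCat.ofHom (LinearMap.inr B F M) ≫ ModuleCat.ofHom
      (π ∘ₗ LinearMap.fst B F M - x • LinearMap.snd B F M) = -(x • 𝟙 (ModuleCat.of B M)) := by
    ext; simp
  rw [e1, e2] at hw'
  refine ⟨-w, ?_⟩
  simpa [Ext.mk₀_neg, Ext.mk₀_smul] using hw'.symm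
end

section
variable {A B : Type} [CommRing A] [CommRing B] [Algebra A B]
  {P M : Type} [AddCommGroup P] [Module A P] [AddCommGroup M] [Module A M] [Module B M]
  [IsScalarTower A B M]

/-- The pullback `{(p, m) | π p = x m}`. -/
def sacK (x : A) (π : P →ₗ[A] M) : Submodule A (P × M) :=
  LinearMap.ker (π ∘ₗ LinearMap.fst A P M - x • LinearMap.snd A P M)

omit [Module B M] [IsScalarTower A B M] in
theorem mem_sacK (x : A) (π : P →ₗ[A] M) (y : P × M) : y ∈ sacK x π ↔ π y.1 = x • y.2 := by
  simp [sacK, sub_eq_zero]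

/-- `B ⊗ K → B ⊗ P`. -/
noncomputable def sacFst (B : Type) [CommRing B] [Algebra A B] (x : A) (π : P →ₗ[A] M) :
    B ⊗[A] (sacK x π) →ₗ[B] B ⊗[A] P :=
  (LinearMap.fst A P M ∘ₗ (sacK x π).subtype).baseChange B

/-- The linear extension of an `A`-linear map to a `B`-module. -/
noncomputable def sacLift (B : Type) [CommRing B] [Algebra A B] [Module B M]
    [IsScalarTower A B M] {Q : Type} [AddCommGroup Q] [Module A Q] (f : Q →ₗ[A] M) :
    B ⊗[A] Q →ₗ[B] M := AlgebraTensorModule.lift ((LinearMap.toSpanSingleton B _ f))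

theorem sacLift_tmul {Q : Type} [AddCommGroup Q] [Module A Q] (f : Q →ₗ[A] M) (b : B) (q : Q) :
    sacLift B f (b ⊗ₜ q) = b • f q := rfl

/-- The inclusion `B ⊗ K → (B ⊗ P) × M`. -/
noncomputable def sacI (B : Type) [CommRing B] [Algebra A B] [Module B M]
    [IsScalarTower A B M] (x : A) (π : P →ₗ[A] M) :
    B ⊗[A] (sacK x π) →ₗ[B] (B ⊗[A] P) × M :=
  (sacFst B x π).prod (sacLift B (LinearMap.snd A P M ∘ₗ (sacK x π).subtype))

theorem sacI_tmul (x : A) (π : P →ₗ[A] M) (b : B) (q : sacK x π) :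
    sacI B x π (b ⊗ₜ q) = (b ⊗ₜ[A] q.1.1, b • q.1.2) := rfl

variable (x : A) (hAB : ∀ b : B, ∃ (a : A) (b' : B), b = algebraMap A B a + algebraMap A B x * b')
include hAB

theorem sac_tensor_decomp {Q : Type} [AddCommGroup Q] [Module A Q] (t : B ⊗[A] Q) :
    ∃ (q : Q) (t' : B ⊗[A] Q), t = 1 ⊗ₜ q + algebraMap A B x • t' := by
  induction t with
  | zero => exact ⟨0, 0, by simp⟩
  | add s t hs ht =>
    obtain ⟨q, s', rfl⟩ := hs
    obtain ⟨q', t', rfl⟩ := ht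
    refine ⟨q + q', s' + t', ?_⟩
    rw [tmul_add, smul_add]; abel
  | tmul b q =>
    obtain ⟨a, b', rfl⟩ := hAB b
    refine ⟨a • q, b' ⊗ₜ q, ?_⟩
    rw [add_tmul, ← smul_eq_mul, ← smul_tmul', tmul_smul, smul_tmul', Algebra.algebraMap_eq_smul_one a]
    rfl

theorem sacI_injective [Module.Flat A B] (π : P →ₗ[A] M) : Function.Injective (sacI B x π) := by
  rw [injective_iff_map_eq_zero]
  intro t ht
  have h1 : sacFst B x π t = 0 := congrArg Prod.fst ht
  let f : sacK x π →ₗ[A] P := LinearMap.fst A P M ∘ₗ (sacK x π).subtype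
  have hex0 : Function.Exact (LinearMap.ker f).subtype f := LinearMap.exact_subtype_ker_map f
  have hex : Function.Exact ((LinearMap.ker f).subtype.lTensor B) (f.lTensor B) :=
    Module.Flat.lTensor_exact B (N := LinearMap.ker f) (N' := sacK x π) (N'' := P) hex0
  obtain ⟨s, rfl⟩ := (hex t).1 h1
  have hker : ∀ q : LinearMap.ker f, x • q = 0 := by
    rintro ⟨⟨⟨p, m⟩, hq⟩, hq'⟩
    have hp : p = 0 := hq'
    subst hp
    rw [mem_sacK] at hq
    ext
    · simp
    · simpa using hq.symm
  have hs' : ∀ s' : B ⊗[A] LinearMap.ker f, algebraMap A B x • s' = 0 := by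
    intro s'
    rw [algebraMap_smul]
    induction s' with
    | zero => simp
    | add s t hs ht => rw [smul_add, hs, ht, add_zero]
    | tmul b q => rw [← tmul_smul, hker, tmul_zero]
  obtain ⟨q, s', rfl⟩ := sac_tensor_decomp (Q := LinearMap.ker f) x hAB s
  rw [hs' s', add_zero] at ht ⊢
  have h2 : (q : sacK x π) = 0 := by
    have h3 : (sacI B x π (1 ⊗ₜ (q : sacK x π))).2 = 0 := congrArg Prod.snd ht
    rw [sacI_tmul, one_smul] at h3
    have h4 : (q : sacK x π).1.1 = 0 := q.2
    exact Subtype.ext (Prod.ext h4 h3)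
  rw [LinearMap.lTensor_tmul, Submodule.subtype_apply, h2, tmul_zero]

theorem sacI_exact (π : P →ₗ[A] M) : Function.Exact (sacI B x π)
    (sacLift B π ∘ₗ LinearMap.fst B (B ⊗[A] P) M - algebraMap A B x • LinearMap.snd B (B ⊗[A] P) M) := by
  have hz : ∀ t, (sacLift B π ∘ₗ LinearMap.fst B (B ⊗[A] P) M -
      algebraMap A B x • LinearMap.snd B (B ⊗[A] P) M) (sacI B x π t) = 0 := by
    intro t
    induction t with
    | zero => simp
    | add s t hs ht => rw [map_add, map_add, hs, ht, add_zero]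
    | tmul b q =>
      have := (mem_sacK x π q.1).1 q.2
      rw [sacI_tmul]
      simp only [LinearMap.sub_apply, LinearMap.comp_apply, LinearMap.fst_apply, sacLift_tmul,
        LinearMap.smul_apply, LinearMap.snd_apply, this, algebraMap_smul]
      rw [smul_comm, sub_self]
  have hr : ∀ u : B ⊗[A] P, ∃ t, sacI B x π t = (algebraMap A B x • u, sacLift B π u) := by
    intro u
    induction u with
    | zero => exact ⟨0, by simp; rfl⟩
    | add s t hs ht =>
      obtain ⟨s', hs⟩ := hs
      obtain ⟨t', ht⟩ := ht
      exact ⟨s' + t', by rw [map_add, hs, ht, map_add, smul_add]; rfl⟩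
    | tmul b p =>
      refine ⟨b ⊗ₜ ⟨(x • p, π p), by simp [mem_sacK]⟩, ?_⟩
      rw [sacI_tmul, sacLift_tmul, algebraMap_smul]
      simp
  rintro ⟨u, m⟩
  constructor
  · intro h
    obtain ⟨p, u', rfl⟩ := sac_tensor_decomp x hAB u
    obtain ⟨t, ht⟩ := hr u'
    have h' : π p = x • (m - sacLift B π u') := by
      simp [sacLift_tmul, sub_eq_zero] at h
      rw [smul_sub, ← h]; simp
    refine ⟨1 ⊗ₜ ⟨(p, m - sacLift B π u'), (mem_sacK _ _ _).2 h'⟩ + t, ?_⟩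
    rw [map_add, ht, sacI_tmul]
    simp
  · rintro ⟨t, ht⟩
    rw [← ht]; exact hz t

theorem sacK_finite [IsNoetherianRing A] [IsNoetherianRing B] [Module.Finite A P]
    [Module.Finite B M] (π : P →ₗ[A] M) : Module.Finite A (sacK x π) := by
  rw [Module.Finite.iff_fg]
  refine Submodule.fg_of_fg_map_of_fg_inf_ker (LinearMap.fst A P M)
    (IsNoetherian.noetherian _) ?_
  obtain ⟨S, hS⟩ := IsNoetherian.noetherian (LinearMap.ker (LinearMap.lsmul B M (algebraMap A B x)))
  have hle : ∀ y ∈ Submodule.span B (S : Set M), y ∈ Submodule.span A (S : Set M) := by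
    intro y hy
    induction hy using Submodule.span_induction with
    | mem y hy => exact Submodule.subset_span hy
    | zero => exact zero_mem _
    | add y z _ _ hy hz => exact add_mem hy hz
    | smul b y hy0 hy =>
      rw [hS] at hy0
      have hy1 : algebraMap A B x • y = 0 := by simpa using hy0
      obtain ⟨a, b', rfl⟩ := hAB b
      rw [add_smul, mul_comm, mul_smul, hy1, smul_zero, add_zero, algebraMap_smul]
      exact Submodule.smul_mem _ _ hy
  have heq : sacK x π ⊓ LinearMap.ker (LinearMap.fst A P M) =
      (Submodule.span A (S : Set M)).map (LinearMap.inr A P M) := by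
    apply le_antisymm
    · rintro ⟨p, m⟩ ⟨h1, h2⟩
      have hp : p = 0 := h2
      subst hp
      have h1' := (mem_sacK _ _ _).1 h1
      refine ⟨m, hle m ?_, rfl⟩
      rw [hS]
      simpa using h1'.symm
    · rw [Submodule.map_span, Submodule.span_le]
      rintro _ ⟨m, hm, rfl⟩
      have hm' : m ∈ Submodule.span B (S : Set M) := Submodule.subset_span hm
      rw [hS] at hm'
      have hm1 : x • m = 0 := by simpa using hm'
      refine ⟨(mem_sacK _ _ _).2 ?_, ?_⟩
      · simp [hm1]
      · simp
  rw [heq]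
  exact Submodule.FG.map _ ⟨S, rfl⟩

end

/-- One step. -/
theorem sac_step {A B : Type} [CommRing A] [CommRing B] [Algebra A B] [IsNoetherianRing A]
    [IsNoetherianRing B] [Module.FaithfullyFlat A B] (x : A)
    (hx : algebraMap A B x ∈ Ideal.jacobson (⊥ : Ideal B))
    (hAB : ∀ b : B, ∃ (a : A) (b' : B), b = algebraMap A B a + algebraMap A B x * b')
    (h : SAC A) : SAC B := by
  rw [sac_iff] at h ⊢
  rintro M _ _ _ h1 ⟨k, h2⟩
  letI : Module A M := Module.compHom M (algebraMap A B)
  haveI : IsScalarTower A B M := IsScalarTower.of_compHom A B M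
  obtain ⟨l, p, hp⟩ := Module.Finite.exists_fin' B M
  let π : (Fin l → A) →ₗ[A] M := p.restrictScalars A ∘ₗ (Algebra.linearMap A B).compLeft (Fin l)
  have hs : Function.Surjective (sacLift B π ∘ₗ LinearMap.fst B (B ⊗[A] (Fin l → A)) M -
      algebraMap A B x • LinearMap.snd B (B ⊗[A] (Fin l → A)) M) := by
    intro m
    obtain ⟨v, rfl⟩ := hp m
    refine ⟨(∑ j, v j ⊗ₜ Pi.single j 1, 0), ?_⟩
    have h5 : ∀ j, π (Pi.single j 1) = p (Pi.single j 1) := by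
      intro j
      change p _ = _
      congr 1
      ext i
      simp only [LinearMap.compLeft_apply, Function.comp_apply, Algebra.linearMap_apply]
      rcases eq_or_ne i j with rfl | h
      · simp
      · simp [h]
    simp only [LinearMap.sub_apply, LinearMap.comp_apply, LinearMap.fst_apply,
      LinearMap.smul_apply, LinearMap.snd_apply, smul_zero, sub_zero, map_sum, sacLift_tmul, h5,
      ← map_smul]
    rw [← map_sum]
    congr 1
    ext i
    simp [Finset.sum_apply, Pi.single_apply]
  have hfin := sacK_finite x hAB π
  have hi := sacI_injective x hAB π
  have hex := sacI_exact x hAB π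
  refine sac_step_down _ (sacLift B π) (sacI B x π) hi hex hs hx h1 ?_
  have hR := sac_step_up_R _ (sacLift B π) (sacI B x π) hi hex hs h1
  have hX := sac_step_up _ (sacLift B π) (sacI B x π) hi hex hs h1 k h2
  intro n
  rw [← sac_baseChange_ext]
  refine h _ (fun i => ?_) ⟨k+1, fun i hi => ?_⟩ n
  · rw [sac_baseChange_ext (B := B)]
    exact sac_ext_iso (Iso.refl _) (AlgebraTensorModule.rid A B B).symm.toModuleIso _ (hR i)
  · rw [sac_baseChange_ext (B := B)]
    exact hX i hi

theorem sac_lift {A S : Type} [CommRing A] [CommRing S] (f : A →+* S) (I : Ideal A)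
    [IsAdicComplete (I.map f) S] : ∃ ψ : AdicCompletion I A →+* S,
      (∀ (n : ℕ) (x : AdicCompletion I A) (a : A),
        AdicCompletion.evalₐ I n x = Ideal.Quotient.mk (I ^ n) a → ψ x - f a ∈ (I.map f) ^ n) ∧
      (∀ a, ψ (algebraMap A _ a) = f a) := by
  have hle : ∀ n, I ^ n ≤ ((I.map f) ^ n).comap f := fun n => by
    rw [← Ideal.map_le_iff_le_comap, Ideal.map_pow]
  have hf : ∀ {m n : ℕ} (h : m ≤ n), (Ideal.Quotient.factorPow (I.map f) h).comp
      ((Ideal.quotientMap ((I.map f) ^ n) f (hle n)).comp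
        (AdicCompletion.evalₐ I n : AdicCompletion I A →+* A ⧸ I ^ n)) =
      (Ideal.quotientMap ((I.map f) ^ m) f (hle m)).comp
        (AdicCompletion.evalₐ I m : AdicCompletion I A →+* A ⧸ I ^ m) := by
    intro m n h
    ext x
    obtain ⟨y, rfl⟩ := AdicCompletion.mk_surjective I A x
    have h1 : Ideal.Quotient.mk (I ^ m) (y.val n) = Ideal.Quotient.mk (I ^ m) (y.val m) := by
      have := y.2 h
      rw [eq_comm, Ideal.Quotient.mk_eq_mk_iff_sub_mem]
      have h2 := SModEq.sub_mem.1 this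
      simpa using h2
    simp only [RingHom.comp_apply, RingHom.coe_coe, AdicCompletion.evalₐ_mk,
      Ideal.quotientMap_mk]
    have h3 := congrArg (Ideal.quotientMap ((I.map f) ^ m) f (hle m)) h1
    rw [Ideal.quotientMap_mk, Ideal.quotientMap_mk] at h3
    rw [← h3]
    rfl
  let ψ := IsAdicComplete.liftRingHom (I.map f) _ hf
  have h1 : ∀ (n : ℕ) (x : AdicCompletion I A) (a : A),
        AdicCompletion.evalₐ I n x = Ideal.Quotient.mk (I ^ n) a → ψ x - f a ∈ (I.map f) ^ n := by
    intro n x a h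
    rw [← Ideal.Quotient.mk_eq_mk_iff_sub_mem]
    have := IsAdicComplete.mk_liftRingHom (I.map f) _ hf n x
    refine this.trans ?_
    simp only [RingHom.comp_apply, RingHom.coe_coe, h, Ideal.quotientMap_mk]
  refine ⟨ψ, h1, fun a => ?_⟩
  rw [← sub_eq_zero]
  refine IsHausdorff.haus (I := I.map f) inferInstance _ fun n => ?_
  rw [SModEq.zero]
  simpa using h1 n (algebraMap A _ a) a (AdicCompletion.evalₐ_of I n a)

theorem sac_lift_surj {A S : Type} [CommRing A] [CommRing S] (f : A →+* S) (I : Ideal A)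
    (hI : I.FG) [IsAdicComplete (I.map f) S] (hs : ∀ s, ∃ a, s - f a ∈ I.map f)
    (ψ : AdicCompletion I A →+* S) (hψ : ∀ a, ψ (algebraMap A _ a) = f a) :
    Function.Surjective ψ := by
  have := AdicCompletion.isAdicComplete_self I hI
  have hc : ψ.comp (algebraMap A _) = f := RingHom.ext hψ
  have hm : (I.map (algebraMap A (AdicCompletion I A))).map ψ = I.map f := by
    rw [Ideal.map_map, hc]
  have : IsHausdorff ((I.map (algebraMap A (AdicCompletion I A))).map ψ) S := by
    rw [hm]; infer_instance
  refine surjective_of_mk_map_comp_surjective (I := I.map (algebraMap A (AdicCompletion I A))) ψ ?_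
  intro s
  obtain ⟨s, rfl⟩ := Ideal.Quotient.mk_surjective s
  obtain ⟨a, ha⟩ := hs s
  refine ⟨algebraMap A _ a, ?_⟩
  rw [RingHom.comp_apply, hψ, eq_comm, Ideal.Quotient.mk_eq_mk_iff_sub_mem, hm]
  exact ha

theorem sac_compl_decomp {S : Type} [CommRing S] (J : Ideal S) (hJ : J.FG)
    (s : AdicCompletion J S) : ∃ a, s - algebraMap S _ a ∈ J.map (algebraMap S (AdicCompletion J S)) := by
  obtain ⟨a, ha⟩ := Ideal.Quotient.mk_surjective (AdicCompletion.evalOneₐ J s)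
  refine ⟨a, ?_⟩
  rw [← AdicCompletion.ker_evalOneₐ_eq_map J hJ, RingHom.mem_ker, map_sub, sub_eq_zero]
  exact ha.symm

theorem sac_compl_noeth {S : Type} [CommRing S] [IsNoetherianRing S] (J : Ideal S) :
    IsNoetherianRing (AdicCompletion J S) := by
  have hJ : J.FG := IsNoetherian.noetherian J
  obtain ⟨n, a, ha⟩ := Submodule.fg_iff_exists_fin_generating_family.1 hJ
  let e : MvPolynomial (Fin n) S →+* AdicCompletion J S :=
    (algebraMap S _).comp (MvPolynomial.aeval a : MvPolynomial (Fin n) S →ₐ[S] S)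
  have hm : (MvPolynomial.idealOfVars (Fin n) S).map e =
      J.map (algebraMap S (AdicCompletion J S)) := by
    rw [← Ideal.map_map]
    congr 1
    rw [Ideal.map_span, ← Set.range_comp, ← ha]
    congr 2
    ext i
    simp
  have : IsAdicComplete ((MvPolynomial.idealOfVars (Fin n) S).map e) (AdicCompletion J S) := by
    rw [hm]; exact AdicCompletion.isAdicComplete_self J hJ
  obtain ⟨ψ, -, hψ⟩ := sac_lift e (MvPolynomial.idealOfVars (Fin n) S)
  have hsurj := sac_lift_surj e (MvPolynomial.idealOfVars (Fin n) S)
    (Submodule.fg_span (Set.finite_range _)) (fun s => by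
      obtain ⟨b, hb⟩ := sac_compl_decomp J hJ s
      refine ⟨MvPolynomial.C b, ?_⟩
      rw [hm]
      simpa [e] using hb) ψ hψ
  have hN : IsNoetherianRing (AdicCompletion (MvPolynomial.idealOfVars (Fin n) S)
      (MvPolynomial (Fin n) S)) :=
    isNoetherianRing_of_ringEquiv (MvPowerSeries (Fin n) S)
      (MvPowerSeries.toAdicCompletionAlgEquiv (Fin n) S).toRingEquiv
  exact isNoetherianRing_of_surjective _ _ ψ hsurj

theorem sac_compl_ff {S : Type} [CommRing S] [IsNoetherianRing S] (J : Ideal S)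
    (hJ : J ≤ Ideal.jacobson ⊥) : Module.FaithfullyFlat S (AdicCompletion J S) := by
  refine ⟨fun p hp h => ?_⟩
  have hle : J ≤ p := hJ.trans (sInf_le ⟨bot_le, hp⟩)
  have := AdicCompletion.isMaximal_map_of_le J p hle (IsNoetherian.noetherian J)
  apply this.ne_top
  rw [Ideal.smul_top_eq_map] at h
  simpa using h

theorem sac_compl_jac {S : Type} [CommRing S] [IsNoetherianRing S] (J N : Ideal S)
    (hN : N ≤ Ideal.jacobson ⊥) :
    N.map (algebraMap S (AdicCompletion J S)) ≤ Ideal.jacobson ⊥ := by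
  have hfg : J.FG := IsNoetherian.noetherian J
  have := AdicCompletion.isAdicComplete_self J hfg
  have hJ' := IsAdicComplete.le_jacobson_bot (J.map (algebraMap S (AdicCompletion J S)))
  refine le_sInf ?_
  rintro p ⟨-, hp⟩
  have hle : J.map (algebraMap S (AdicCompletion J S)) ≤ p := hJ'.trans (sInf_le ⟨bot_le, hp⟩)
  rw [Ideal.map_le_iff_le_comap]
  let g : S →+* AdicCompletion J S ⧸ p := (Ideal.Quotient.mk p).comp (algebraMap S _)
  have hg : Function.Surjective g := by
    intro y
    obtain ⟨y, rfl⟩ := Ideal.Quotient.mk_surjective y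
    obtain ⟨a, ha⟩ := sac_compl_decomp J hfg y
    refine ⟨a, ?_⟩
    rw [eq_comm]
    exact (Ideal.Quotient.mk_eq_mk_iff_sub_mem _ _).2 (hle ha)
  letI := Ideal.Quotient.field p
  have hk : (RingHom.ker g).IsMaximal := RingHom.ker_isMaximal_of_surjective g hg
  have hk2 : RingHom.ker g = p.comap (algebraMap S _) := by
    ext y
    rw [RingHom.mem_ker, Ideal.mem_comap, ← Ideal.Quotient.eq_zero_iff_mem]
    rfl
  rw [← hk2]
  exact hN.trans (sInf_le ⟨bot_le, hk⟩)

/-- One step of the chain. -/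
theorem sac_chain_step {S : Type} [CommRing S] [IsNoetherianRing S] (J : Ideal S) (x : S)
    [IsAdicComplete J S] (hx : J ⊔ Ideal.span {x} ≤ Ideal.jacobson ⊥) (h : SAC S) :
    SAC (AdicCompletion (J ⊔ Ideal.span {x}) S) := by
  have hfg : (J ⊔ Ideal.span {x}).FG := IsNoetherian.noetherian _
  haveI := sac_compl_noeth (J ⊔ Ideal.span {x})
  haveI := sac_compl_ff _ hx
  have hj := sac_compl_jac (J ⊔ Ideal.span {x}) _ hx
  have hxm : x ∈ J ⊔ Ideal.span {x} := Ideal.mem_sup_right (Ideal.mem_span_singleton_self x)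
  refine sac_step x (hj (Ideal.mem_map_of_mem _ hxm)) ?_ h
  let T := AdicCompletion (J ⊔ Ideal.span {x}) S
  let Q := T ⧸ Ideal.span {algebraMap S T x}
  let f : S →+* Q := (Ideal.Quotient.mk _).comp (algebraMap S T)
  have hjac : J.map (algebraMap S T) ≤ Ideal.jacobson ⊥ :=
    (Ideal.map_mono le_sup_left).trans hj
  have hH : IsHausdorff (J.map f) Q := by
    have h1 := IsHausdorff.of_le_jacobson (J.map (algebraMap S T)) Q hjac
    have h2 : J.map f = (J.map (algebraMap S T)).map (algebraMap T Q) := by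
      rw [Ideal.map_map]; rfl
    rw [h2, IsHausdorff.map_algebraMap_iff]
    exact h1
  have hsurj : Function.Surjective f := by
    refine surjective_of_mk_map_comp_surjective (I := J) f ?_
    intro y
    obtain ⟨y, rfl⟩ := Ideal.Quotient.mk_surjective y
    obtain ⟨y, rfl⟩ := Ideal.Quotient.mk_surjective y
    obtain ⟨a, ha⟩ := sac_compl_decomp _ hfg y
    refine ⟨a, ?_⟩
    rw [RingHom.comp_apply, eq_comm, Ideal.Quotient.mk_eq_mk_iff_sub_mem]
    have h2 : J.map f = (J.map (algebraMap S T)).map (Ideal.Quotient.mk _) := by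
      rw [Ideal.map_map]
    rw [h2]
    rw [Ideal.map_sup, Ideal.map_span, Set.image_singleton] at ha
    obtain ⟨u, hu, v, hv, huv⟩ := Submodule.mem_sup.1 ha
    have h3 : Ideal.Quotient.mk (Ideal.span {algebraMap S T x}) (y - algebraMap S T a) =
        Ideal.Quotient.mk _ u := by
      rw [← huv, map_add, Ideal.Quotient.eq_zero_iff_mem.2 hv, add_zero]
    have h4 := Ideal.mem_map_of_mem (Ideal.Quotient.mk (Ideal.span {algebraMap S T x})) hu
    rw [← h3, map_sub] at h4
    exact h4
  intro b
  obtain ⟨a, ha⟩ := hsurj (Ideal.Quotient.mk _ b)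
  have h5 : b - algebraMap S T a ∈ Ideal.span {algebraMap S T x} :=
    (Ideal.Quotient.mk_eq_mk_iff_sub_mem _ _).1 ha.symm
  obtain ⟨c, hc⟩ := Ideal.mem_span_singleton'.1 h5
  exact ⟨a, c, by rw [mul_comm, hc]; ring⟩

theorem sac_chain {R : Type} [CommRing R] [IsNoetherianRing R] (N : Ideal R)
    (hN : N ≤ Ideal.jacobson ⊥) (h : SAC R) (t : Finset R) :
    (t : Set R) ⊆ N → ∃ (S : Type) (_ : CommRing S) (_ : Algebra R S), IsNoetherianRing S ∧
      Module.FaithfullyFlat R S ∧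
      IsAdicComplete ((Ideal.span (t : Set R)).map (algebraMap R S)) S ∧ SAC S ∧
      N.map (algebraMap R S) ≤ Ideal.jacobson ⊥ ∧
      ∀ s : S, ∃ r : R, s - algebraMap R S r ∈ N.map (algebraMap R S) := by
  classical
  induction t using Finset.induction_on with
  | empty =>
    intro _
    refine ⟨R, inferInstance, inferInstance, inferInstance, inferInstance, ?_, h, ?_, ?_⟩
    · simp only [Finset.coe_empty, Ideal.span_empty, Ideal.map_bot]
      infer_instance
    · simpa [Ideal.map_id] using hN
    · intro s
      exact ⟨s, by simp⟩
  | insert x t hxt ih =>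
    intro ht
    rw [Finset.coe_insert, Set.insert_subset_iff] at ht
    obtain ⟨S, _, _, hn, hff, hc, hS, hj, hd⟩ := ih ht.2
    let J := (Ideal.span (t : Set R)).map (algebraMap R S)
    let J' := J ⊔ Ideal.span {algebraMap R S x}
    have hJ'eq : J' = (Ideal.span ((insert x t : Finset R) : Set R)).map (algebraMap R S) := by
      rw [Finset.coe_insert, Ideal.span_insert, Ideal.map_sup, Ideal.map_span _ {x},
        Set.image_singleton, sup_comm]
    have hJ'N : J' ≤ N.map (algebraMap R S) := by
      rw [hJ'eq]
      refine Ideal.map_mono (Ideal.span_le.2 ?_)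
      rw [Finset.coe_insert, Set.insert_subset_iff]
      exact ht
    have hmap : ∀ I : Ideal R, I.map (algebraMap R (AdicCompletion J' S)) =
        (I.map (algebraMap R S)).map (algebraMap S (AdicCompletion J' S)) := by
      intro I
      rw [Ideal.map_map, ← IsScalarTower.algebraMap_eq]
    have hff2 := sac_compl_ff J' (hJ'N.trans hj)
    refine ⟨AdicCompletion J' S, inferInstance, inferInstance, sac_compl_noeth J', ?_, ?_, ?_, ?_, ?_⟩
    · exact Module.FaithfullyFlat.trans R S _
    · rw [hmap, ← hJ'eq]
      exact AdicCompletion.isAdicComplete_self J' (IsNoetherian.noetherian _)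
    · exact sac_chain_step J _ (hJ'N.trans hj) hS
    · rw [hmap]
      exact sac_compl_jac J' _ hj
    · intro s
      obtain ⟨a, ha⟩ := sac_compl_decomp J' (IsNoetherian.noetherian _) s
      obtain ⟨r, hr⟩ := hd a
      refine ⟨r, ?_⟩
      rw [hmap]
      have h1 := Ideal.map_mono (f := algebraMap S (AdicCompletion J' S)) hJ'N ha
      have h2 := Ideal.mem_map_of_mem (algebraMap S (AdicCompletion J' S)) hr
      have h3 := add_mem h1 h2
      rw [map_sub, sub_add_sub_cancel, ← IsScalarTower.algebraMap_apply] at h3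
      exact h3

theorem sac_ascent {R : Type} [CommRing R] [IsNoetherianRing R] (N : Ideal R)
    (hN : N ≤ Ideal.jacobson ⊥) (h : SAC R) : SAC (AdicCompletion N R) := by
  have hfg : N.FG := IsNoetherian.noetherian N
  obtain ⟨t, ht⟩ := hfg
  obtain ⟨S, _, _, hn, hff, hc, hS, hj, hd⟩ := sac_chain N hN h t
    (by rw [← ht]; exact Ideal.subset_span)
  have ht' : Ideal.span (t : Set R) = N := ht
  rw [ht'] at hc
  obtain ⟨ψ, h1, h2⟩ := sac_lift (algebraMap R S) N
  have hsurj := sac_lift_surj (algebraMap R S) N ⟨t, ht⟩ hd ψ h2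
  have hinj : Function.Injective ψ := by
    rw [injective_iff_map_eq_zero]
    intro y hy
    refine AdicCompletion.ext_evalₐ fun n => ?_
    obtain ⟨a, ha⟩ := Ideal.Quotient.mk_surjective (AdicCompletion.evalₐ N n y)
    have h3 := h1 n y a ha.symm
    rw [hy, zero_sub, neg_mem_iff, ← Ideal.map_pow, ← Ideal.mem_comap,
      Ideal.comap_map_eq_self_of_faithfullyFlat] at h3
    rw [← ha, map_zero, Ideal.Quotient.eq_zero_iff_mem]
    exact h3
  letI := ψ.toAlgebra
  haveI := sac_compl_noeth N
  haveI : Module.FaithfullyFlat (AdicCompletion N R) S := by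
    have := RingHom.FaithfullyFlat.of_bijective ⟨hinj, hsurj⟩
    exact this
  exact sac_descent hS

/-- A Noetherian local ring satisfies (SAC) iff its maximal-adic completion does. -/
theorem stmt_15 (R : Type) [CommRing R] [IsNoetherianRing R] [IsLocalRing R] :
    SAC R ↔ SAC (AdicCompletion (IsLocalRing.maximalIdeal R) R) := by
  have hm : IsLocalRing.maximalIdeal R ≤ Ideal.jacobson ⊥ := IsLocalRing.maximalIdeal_le_jacobson _
  haveI := sac_compl_ff (IsLocalRing.maximalIdeal R) hm
  exact ⟨sac_ascent _ hm, fun h => sac_descent h⟩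
end

section
/- Every local complete intersection ring satisfies (SAC): if R is a Noetherian local ring whose completion is a quotient of a regular local ring by a regular sequence, then for every finitely generated R-module M, Ext_R^{>0}(M,R) = 0 and Ext_R^{≫0}(M,M) = 0 imply Ext_R^{>0}(M,M) = 0. -/
open CategoryTheory

/-- Vanishing of the `i`-th Ext group (in the sense of derived categories). -/
def EV (R : Type) [CommRing R] (i : ℕ) (M N : Type) [AddCommGroup M] [Module R M]
    [AddCommGroup N] [Module R N] : Prop :=
  Subsingleton (Abelian.Ext (ModuleCat.of R M) (ModuleCat.of R N) i)

section EVbasic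

variable {R : Type} [CommRing R]

theorem EV_iff_zero {i : ℕ} {M N : Type} [AddCommGroup M] [Module R M]
    [AddCommGroup N] [Module R N] :
    EV R i M N ↔ ∀ x : Abelian.Ext (ModuleCat.of R M) (ModuleCat.of R N) i, x = 0 :=
  ⟨fun h _ => @Subsingleton.elim _ h _ _, fun h => ⟨fun x y => (h x).trans (h y).symm⟩⟩

theorem ses_shortExact {A B C : Type} [AddCommGroup A] [AddCommGroup B] [AddCommGroup C]
    [Module R A] [Module R B] [Module R C] {f : A →ₗ[R] B} {g : B →ₗ[R] C}
    (hf : Function.Injective f) (hfg : Function.Exact f g) (hg : Function.Surjective g) :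
    (ShortComplex.moduleCatMk f g hfg.linearMap_comp_eq_zero).ShortExact := by
  have : Mono (ShortComplex.moduleCatMk f g hfg.linearMap_comp_eq_zero).f :=
    (ModuleCat.mono_iff_injective _).2 hf
  have : Epi (ShortComplex.moduleCatMk f g hfg.linearMap_comp_eq_zero).g :=
    (ModuleCat.epi_iff_surjective _).2 hg
  refine ⟨?_⟩
  rw [ShortComplex.ShortExact.moduleCat_exact_iff_function_exact]
  exact hfg

theorem EV_of_projective (i : ℕ) (P N : Type) [AddCommGroup P] [Module R P] [AddCommGroup N]
    [Module R N] [Module.Projective R P] : EV R (i + 1) P N :=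
  Abelian.Ext.subsingleton_of_projective _ _ _

variable {A B C : Type} [AddCommGroup A] [AddCommGroup B] [AddCommGroup C]
    [Module R A] [Module R B] [Module R C] {f : A →ₗ[R] B} {g : B →ₗ[R] C}
    {N : Type} [AddCommGroup N] [Module R N]

theorem EV_contra_mid (hf : Function.Injective f) (hfg : Function.Exact f g)
    (hg : Function.Surjective g) (i : ℕ) (h1 : EV R i A N) (h3 : EV R i C N) : EV R i B N := by
  rw [EV_iff_zero] at *
  intro x
  obtain ⟨y, hy⟩ := Abelian.Ext.contravariant_sequence_exact₂ (ses_shortExact hf hfg hg) _ x (h1 _)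
  have hy0 : y = 0 := h3 y
  subst hy0
  exact hy.symm.trans (Abelian.Ext.comp_zero _ _ _ _ _)

theorem EV_contra_left (hf : Function.Injective f) (hfg : Function.Exact f g)
    (hg : Function.Surjective g) (i : ℕ) (h1 : EV R i B N) (h3 : EV R (i + 1) C N) :
    EV R i A N := by
  rw [EV_iff_zero] at *
  intro x
  obtain ⟨y, hy⟩ := Abelian.Ext.contravariant_sequence_exact₁ (ses_shortExact hf hfg hg) _ x
    (add_comm 1 i) (h3 _)
  have hy0 : y = 0 := h1 y
  subst hy0
  exact hy.symm.trans (Abelian.Ext.comp_zero _ _ _ _ _)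

theorem EV_contra_right (hf : Function.Injective f) (hfg : Function.Exact f g)
    (hg : Function.Surjective g) (i : ℕ) (h1 : EV R i A N) (h3 : EV R (i + 1) B N) :
    EV R (i + 1) C N := by
  rw [EV_iff_zero] at *
  intro x
  obtain ⟨y, hy⟩ := Abelian.Ext.contravariant_sequence_exact₃ (ses_shortExact hf hfg hg) _ x
    (h3 _) (add_comm 1 i)
  have hy0 : y = 0 := h1 y
  subst hy0
  exact hy.symm.trans (Abelian.Ext.comp_zero _ _ _ _ _)

theorem EV_cov_right (hf : Function.Injective f) (hfg : Function.Exact f g)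
    (hg : Function.Surjective g) (i : ℕ) (h1 : EV R i N B) (h3 : EV R (i + 1) N A) :
    EV R i N C := by
  rw [EV_iff_zero] at *
  intro x
  obtain ⟨y, hy⟩ := Abelian.Ext.covariant_sequence_exact₃ _ (ses_shortExact hf hfg hg) x
    rfl (h3 _)
  have hy0 : y = 0 := h1 y
  subst hy0
  exact hy.symm.trans (Abelian.Ext.zero_comp _ _ _ _ _)

theorem EV_shift [Module.Projective R B] (hf : Function.Injective f) (hfg : Function.Exact f g)
    (hg : Function.Surjective g) (i : ℕ) : EV R (i + 2) C N ↔ EV R (i + 1) A N :=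
  ⟨fun h => EV_contra_left hf hfg hg _ (EV_of_projective _ _ _) h,
    fun h => EV_contra_right hf hfg hg _ h (EV_of_projective _ _ _)⟩

theorem EV_one_iff [Module.Projective R B] (hf : Function.Injective f) (hfg : Function.Exact f g)
    (hg : Function.Surjective g) :
    EV R 1 C N ↔ ∀ u : A →ₗ[R] N, ∃ v : B →ₗ[R] N, v ∘ₗ f = u := by
  have hS := ses_shortExact hf hfg hg
  rw [EV_iff_zero]
  constructor
  · intro h u
    obtain ⟨y, hy⟩ := Abelian.Ext.contravariant_sequence_exact₁ hS _
      (Abelian.Ext.mk₀ (ModuleCat.ofHom u)) (add_comm 1 0) (h _)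
    obtain ⟨v, rfl⟩ := Abelian.Ext.mk₀_bijective _ _ |>.2 y
    rw [Abelian.Ext.mk₀_comp_mk₀] at hy
    have := (Abelian.Ext.mk₀_bijective _ _).1 hy
    refine ⟨v.hom, ?_⟩
    have h2 := congrArg ModuleCat.Hom.hom this
    exact h2
  · intro h x
    obtain ⟨y, hy⟩ := Abelian.Ext.contravariant_sequence_exact₃ hS _ x
      (EV_iff_zero.1 (EV_of_projective 0 B N) _) (add_comm 1 0)
    obtain ⟨u, rfl⟩ := Abelian.Ext.mk₀_bijective _ _ |>.2 y
    obtain ⟨v, hv⟩ := h u.hom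
    let v' : (ShortComplex.moduleCatMk f g hfg.linearMap_comp_eq_zero).X₂ ⟶ ModuleCat.of R N :=
      ModuleCat.ofHom v
    have : u = (ShortComplex.moduleCatMk f g hfg.linearMap_comp_eq_zero).f ≫ v' := by
      ext1
      exact hv.symm
    subst this
    rw [← hy, ← Abelian.Ext.mk₀_comp_mk₀]
    exact hS.extClass_comp_assoc _

/-- The class of the Yoneda square kills large Ext groups. -/
theorem EV_chi {M E F W : Type} [AddCommGroup M] [AddCommGroup E] [AddCommGroup F] [AddCommGroup W]
    [Module R M] [Module R E] [Module R F] [Module R W] [Module.Projective R F]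
    {a : M →ₗ[R] E} {b : E →ₗ[R] W} (ha : Function.Injective a) (hab : Function.Exact a b)
    (hb : Function.Surjective b)
    {c : W →ₗ[R] F} {d : F →ₗ[R] M} (hc : Function.Injective c) (hcd : Function.Exact c d)
    (hd : Function.Surjective d)
    (hM : ∃ n, ∀ i, n < i → EV R i M M)
    (n : ℕ) (hE : ∀ i, n < i → EV R i E N) :
    ∀ i, n < i → EV R i M N := by
  have hS := ses_shortExact ha hab hb
  have hT := ses_shortExact hc hcd hd
  have key : ∀ j : ℕ, ∃ z : Abelian.Ext (ModuleCat.of R M) (ModuleCat.of R M) (2 * j),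
      ∀ i, n < i → ∀ y : Abelian.Ext (ModuleCat.of R M) (ModuleCat.of R N) i,
        z.comp y rfl = 0 → y = 0 := by
    intro j
    induction j with
    | zero =>
      refine ⟨Abelian.Ext.mk₀ (𝟙 _), fun i hi y hy => ?_⟩
      have : ∀ (k : ℕ) (hk : 0 + i = k), (Abelian.Ext.mk₀ (𝟙 (ModuleCat.of R M))).comp y hk = 0 → y = 0 := by
        intro k hk h
        obtain rfl : i = k := by omega
        simpa using h
      exact this _ _ hy
    | succ j ih =>
      obtain ⟨z, hz⟩ := ih
      let al : Abelian.Ext (ModuleCat.of R W) (ModuleCat.of R M) 1 := hS.extClass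
      let be : Abelian.Ext (ModuleCat.of R M) (ModuleCat.of R W) 1 := hT.extClass
      refine ⟨be.comp (al.comp z (rfl : 1 + 2 * j = 1 + 2 * j)) (by omega), fun i hi y hy => ?_⟩
      apply hz i hi
      rw [Abelian.Ext.comp_assoc (a₂₃ := 1 + 2 * j + i) _ _ _ _ rfl (by omega)] at hy
      rw [Abelian.Ext.comp_assoc (a₂₃ := 2 * j + i) _ _ _ _ rfl (by omega)] at hy
      obtain ⟨p, hp⟩ := Abelian.Ext.contravariant_sequence_exact₁ hT _ _ _ hy
      obtain ⟨m, hm⟩ : ∃ m, 1 + 2 * j + i = m + 1 := ⟨2 * j + i, by omega⟩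
      have hF : EV R (1 + 2 * j + i) F N := by
        rw [hm]
        exact EV_of_projective m F N
      have hp0 : p = 0 := EV_iff_zero.1 hF p
      subst hp0
      replace hp := hp.symm.trans (Abelian.Ext.comp_zero _ _ _ _ _)
      obtain ⟨q, hq⟩ := Abelian.Ext.contravariant_sequence_exact₁ hS _ _ _ hp
      have hq0 : q = 0 := EV_iff_zero.1 (hE (2 * j + i) (by omega)) q
      subst hq0
      exact hq.symm.trans (Abelian.Ext.comp_zero _ _ _ _ _)
  intro i hi
  obtain ⟨m, hm⟩ := hM
  obtain ⟨z, hz⟩ := key (m + 1)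
  rw [EV_iff_zero]
  intro y
  apply hz i hi
  rw [EV_iff_zero.1 (hm (2 * (m + 1)) (by omega)) z, Abelian.Ext.zero_comp]

end EVbasic

theorem EV_iff_ExtGroup {R : Type} [CommRing R] (M N : ModuleCat.{0} R) (i : ℕ) (hi : 0 < i) :
    Subsingleton (ExtGroup R M N i) ↔ EV R i M N := by
  obtain ⟨j, rfl⟩ : ∃ j, i = j + 1 := ⟨i - 1, by omega⟩
  let P : ProjectiveResolution M := ProjectiveResolution.of M
  have e1 : Subsingleton (ExtGroup R M N (j + 1)) ↔
      Subsingleton ((P.complex.linearYonedaObj R N).homology (j + 1)) :=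
    ((P.isoExt (R := R) (j + 1) N).toLinearEquiv).toEquiv.subsingleton_congr
  rw [e1]
  have e2 : Subsingleton ((P.complex.linearYonedaObj R N).homology (j + 1)) ↔
      ∀ f : P.complex.X (j + 1) ⟶ N, P.complex.d (j + 2) (j + 1) ≫ f = 0 →
        ∃ g : P.complex.X j ⟶ N, P.complex.d (j + 1) j ≫ g = f := by
    rw [← ModuleCat.isZero_iff_subsingleton, ← HomologicalComplex.exactAt_iff_isZero_homology,
      HomologicalComplex.exactAt_iff' _ j (j + 1) (j + 2) (by simp) (by simp),
      ShortComplex.moduleCat_exact_iff]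
    exact Iff.rfl
  rw [e2]
  change _ ↔ Subsingleton (Abelian.Ext M N (j + 1))
  constructor
  · intro h
    refine subsingleton_of_forall_eq 0 fun x => ?_
    obtain ⟨f, hf, rfl⟩ := P.extMk_surjective x (j + 2) rfl
    rw [P.extMk_eq_zero_iff f (j + 2) rfl hf j rfl]
    exact h f hf
  · intro h f hf
    rw [← P.extMk_eq_zero_iff f (j + 2) rfl hf j rfl]
    exact Subsingleton.elim _ _

open TensorProduct in
theorem one_tmul_eq_zero {Q : Type} [CommRing Q] (x : Q) {K : Type} [AddCommGroup K] [Module Q K]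
    (k : K) (h : (1 : Q ⧸ Ideal.span {x}) ⊗ₜ[Q] k = 0) : ∃ u : K, k = x • u := by
  have h1 := congrArg (TensorProduct.quotTensorEquivQuotSMul K (Ideal.span {x})) h
  have h2 : TensorProduct.quotTensorEquivQuotSMul K (Ideal.span {x})
      ((1 : Q ⧸ Ideal.span {x}) ⊗ₜ[Q] k) = Submodule.Quotient.mk k := by
    simp
  rw [h2, map_zero, Submodule.Quotient.mk_eq_zero, Submodule.ideal_span_singleton_smul] at h1
  obtain ⟨u, -, hu⟩ := (Submodule.mem_smul_pointwise_iff_exists _ _ _).1 h1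
  exact ⟨u, hu.symm⟩

open TensorProduct in
theorem exists_one_tmul {Q : Type} [CommRing Q] (I : Ideal Q) {K : Type} [AddCommGroup K]
    [Module Q K] (t : (Q ⧸ I) ⊗[Q] K) : ∃ k : K, t = (1 : Q ⧸ I) ⊗ₜ[Q] k := by
  obtain ⟨k, hk⟩ := TensorProduct.mk_surjective Q K (Q ⧸ I) Ideal.Quotient.mk_surjective t
  exact ⟨k, hk.symm⟩

open TensorProduct in
theorem smul_eq_zero_quot {Q : Type} [CommRing Q] (x : Q) {K : Type} [AddCommGroup K]
    [Module Q K] (k : K) : (1 : Q ⧸ Ideal.span {x}) ⊗ₜ[Q] (x • k) = 0 := by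
  rw [← TensorProduct.smul_tmul]
  have : x • (1 : Q ⧸ Ideal.span {x}) = 0 := by
    rw [Algebra.smul_def, mul_one]
    exact Ideal.Quotient.eq_zero_iff_mem.2 (Ideal.mem_span_singleton_self x)
  rw [this, TensorProduct.zero_tmul]

theorem lift_iff {Q S : Type} [CommRing Q] [CommRing S] [Algebra Q S] {A B N : Type}
    [AddCommGroup A] [AddCommGroup B] [AddCommGroup N] [Module Q A] [Module Q B] [Module Q N]
    [Module S N] [IsScalarTower Q S N] (f : A →ₗ[Q] B) :
    (∀ u : TensorProduct Q S A →ₗ[S] N, ∃ v : TensorProduct Q S B →ₗ[S] N,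
      v ∘ₗ f.baseChange S = u) ↔ (∀ u : A →ₗ[Q] N, ∃ v : B →ₗ[Q] N, v ∘ₗ f = u) := by
  constructor
  · intro h u
    obtain ⟨v, hv⟩ := h (u.liftBaseChange S)
    refine ⟨(v.restrictScalars Q) ∘ₗ TensorProduct.mk Q S B 1, ?_⟩
    ext a
    have := LinearMap.congr_fun hv (TensorProduct.tmul Q 1 a)
    simpa using this
  · intro h u
    obtain ⟨v, hv⟩ := h ((u.restrictScalars Q) ∘ₗ TensorProduct.mk Q S A 1)
    refine ⟨v.liftBaseChange S, ?_⟩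
    ext a
    have := LinearMap.congr_fun hv a
    simpa using this

theorem isSMulRegular_free {Q : Type} [CommRing Q] {x : Q} (hx : IsSMulRegular Q x) (F : Type)
    [AddCommGroup F] [Module Q F] [Module.Free Q F] : IsSMulRegular F x := by
  let b := Module.Free.chooseBasis Q F
  intro u v huv
  apply b.repr.injective
  ext i
  apply hx
  have := congrArg (fun w => b.repr w i) huv
  simpa using this

theorem ker_baseChange_inj {Q : Type} [CommRing Q] {x : Q} {F K : Type} [AddCommGroup F]
    [AddCommGroup K] [Module Q F] [Module Q K] (g : F →ₗ[Q] K) (hK : IsSMulRegular K x) :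
    Function.Injective ((LinearMap.ker g).subtype.baseChange (Q ⧸ Ideal.span {x})) := by
  rw [injective_iff_map_eq_zero]
  intro t ht
  obtain ⟨k, rfl⟩ := exists_one_tmul _ t
  rw [LinearMap.baseChange_tmul] at ht
  obtain ⟨u, hu⟩ := one_tmul_eq_zero x _ ht
  have hgu : g u = 0 := by
    apply hK
    have := k.2
    rw [LinearMap.mem_ker] at this
    simp only [Submodule.subtype_apply] at hu
    rw [hu] at this
    simpa using this
  have : k = x • (⟨u, hgu⟩ : LinearMap.ker g) := Subtype.ext hu
  rw [this, smul_eq_zero_quot]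

theorem exact_subtype_ker {Q : Type} [CommRing Q] {F K : Type} [AddCommGroup F]
    [AddCommGroup K] [Module Q F] [Module Q K] (g : F →ₗ[Q] K) :
    Function.Exact (LinearMap.ker g).subtype g := by
  rw [LinearMap.exact_iff, Submodule.range_subtype]

theorem exact_baseChange {Q : Type} [CommRing Q] (S : Type) [CommRing S] [Algebra Q S]
    {A B C : Type} [AddCommGroup A] [AddCommGroup B] [AddCommGroup C] [Module Q A] [Module Q B]
    [Module Q C] {f : A →ₗ[Q] B} {g : B →ₗ[Q] C} (h : Function.Exact f g)
    (hg : Function.Surjective g) : Function.Exact (f.baseChange S) (g.baseChange S) :=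
  lTensor_exact S h hg

theorem surj_baseChange {Q : Type} [CommRing Q] (S : Type) [CommRing S] [Algebra Q S]
    {B C : Type} [AddCommGroup B] [AddCommGroup C] [Module Q B]
    [Module Q C] {g : B →ₗ[Q] C}
    (hg : Function.Surjective g) : Function.Surjective (g.baseChange S) :=
  LinearMap.lTensor_surjective S hg

theorem exists_pres (Q : Type) [CommRing Q] (K : Type) [AddCommGroup K] [Module Q K] :
    ∃ (F : Type) (_ : AddCommGroup F) (_ : Module Q F) (_ : Module.Free Q F) (g : F →ₗ[Q] K),
      Function.Surjective g :=
  ⟨K →₀ Q, inferInstance, inferInstance, inferInstance, Finsupp.linearCombination Q id,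
    Finsupp.linearCombination_id_surjective Q K⟩

theorem EV_quot {Q : Type} [CommRing Q] {x : Q} (hx : IsSMulRegular Q x)
    (N : Type) [AddCommGroup N] [Module Q N] [Module (Q ⧸ Ideal.span {x}) N]
    [IsScalarTower Q (Q ⧸ Ideal.span {x}) N] (i : ℕ) :
    ∀ (K : Type) [AddCommGroup K] [Module Q K], IsSMulRegular K x →
    (EV (Q ⧸ Ideal.span {x}) (i + 1) (TensorProduct Q (Q ⧸ Ideal.span {x}) K) N ↔
      EV Q (i + 1) K N) := by
  induction i with
  | zero =>
    intro K _ _ hK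
    obtain ⟨F, _, _, _, g, hg⟩ := exists_pres Q K
    have e1 := ker_baseChange_inj g hK
    have e2 := exact_baseChange (Q ⧸ Ideal.span {x}) (exact_subtype_ker g) hg
    have e3 := surj_baseChange (Q ⧸ Ideal.span {x}) hg
    rw [zero_add, EV_one_iff (Submodule.subtype_injective _) (exact_subtype_ker g) hg,
      EV_one_iff e1 e2 e3, lift_iff]
  | succ i ih =>
    intro K _ _ hK
    obtain ⟨F, _, _, _, g, hg⟩ := exists_pres Q K
    have e1 := ker_baseChange_inj g hK
    have e2 := exact_baseChange (Q ⧸ Ideal.span {x}) (exact_subtype_ker g) hg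
    have e3 := surj_baseChange (Q ⧸ Ideal.span {x}) hg
    rw [EV_shift (Submodule.subtype_injective _) (exact_subtype_ker g) hg,
      EV_shift e1 e2 e3]
    exact ih _ ((isSMulRegular_free hx _).submodule _ _)

/-- Faithfully flat base change of vanishing of Ext. -/
theorem EV_fflat {R : Type} [CommRing R] [IsNoetherianRing R] (S : Type) [CommRing S] [Algebra R S]
    [Module.FaithfullyFlat R S] (N : Type) [AddCommGroup N] [Module R N] (i : ℕ) :
    ∀ (K : Type) [AddCommGroup K] [Module R K] [Module.Finite R K],
    (EV S (i + 1) (TensorProduct R S K) (TensorProduct R S N) ↔ EV R (i + 1) K N) := by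
  have hinj : ∀ {F K : Type} [AddCommGroup F] [AddCommGroup K] [Module R F] [Module R K]
      (g : F →ₗ[R] K), Function.Injective ((LinearMap.ker g).subtype.baseChange S) := by
    intro F K _ _ _ _ g
    exact Module.Flat.lTensor_preserves_injective_linearMap _ (Submodule.subtype_injective _)
  induction i with
  | zero =>
    intro K _ _ _
    obtain ⟨n, g, hg⟩ := Module.Finite.exists_fin' R K
    rw [zero_add, EV_one_iff (Submodule.subtype_injective _) (exact_subtype_ker g) hg,
      EV_one_iff (hinj g) (exact_baseChange _ (exact_subtype_ker g) hg)
        (surj_baseChange _ hg)]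
    let f := (LinearMap.ker g).subtype
    have : Module.FinitePresentation R (LinearMap.ker g) :=
      Module.finitePresentation_of_finite _ _
    have b1 := Module.FinitePresentation.isBaseChange_map R (Fin n → R) N S
    have b2 := Module.FinitePresentation.isBaseChange_map R (LinearMap.ker g) N S
    have comm : (f.baseChange S).lcomp S (TensorProduct R S N) ∘ₗ b1.equiv.toLinearMap =
        b2.equiv.toLinearMap ∘ₗ (f.lcomp R N).baseChange S := by
      ext u a
      simp [IsBaseChange.equiv_tmul, f]
    have e1 : (∀ u, ∃ v, v ∘ₗ f.baseChange S = u) ↔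
        Function.Surjective ((f.baseChange S).lcomp S (TensorProduct R S N)) := Iff.rfl
    have e2 : (∀ u, ∃ v, v ∘ₗ f = u) ↔
        Function.Surjective (f.lcomp R N) := Iff.rfl
    refine e1.trans (Iff.trans ?_ e2.symm)
    have e3 : Function.Surjective ((f.lcomp R N).baseChange S) ↔
      Function.Surjective (f.lcomp R N) := Module.FaithfullyFlat.lTensor_surjective_iff_surjective R S _
    rw [← e3]
    have e4 : Function.Surjective ((f.baseChange S).lcomp S (TensorProduct R S N) ∘ₗ b1.equiv.toLinearMap) ↔
        Function.Surjective ((f.baseChange S).lcomp S (TensorProduct R S N)) := by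
      rw [LinearMap.coe_comp]
      exact b1.equiv.surjective.of_comp_iff _
    rw [← e4, comm, LinearMap.coe_comp]
    exact b2.equiv.comp_surjective _
  | succ i ih =>
    intro K _ _ _
    obtain ⟨n, g, hg⟩ := Module.Finite.exists_fin' R K
    rw [EV_shift (Submodule.subtype_injective _) (exact_subtype_ker g) hg,
      EV_shift (hinj g) (exact_baseChange _ (exact_subtype_ker g) hg)
        (surj_baseChange _ hg)]
    exact ih _

/-- Vanishing against the residue field implies vanishing against everything. -/
theorem EV_of_residueField {R : Type} [CommRing R] [IsNoetherianRing R] [IsLocalRing R]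
    (N : Type) [AddCommGroup N] [Module R N] (i : ℕ) :
    ∀ (L : Type) [AddCommGroup L] [Module R L] [Module.Finite R L],
    EV R (i + 1) L (IsLocalRing.ResidueField R) → EV R (i + 1) L N := by
  induction i with
  | zero =>
    intro L _ _ _ h
    obtain ⟨n, g, hg⟩ := Module.Finite.exists_fin' R L
    let f := (LinearMap.ker g).subtype
    rw [zero_add, EV_one_iff (Submodule.subtype_injective _) (exact_subtype_ker g) hg] at h ⊢
    have hinj : Function.Injective (f.lTensor (IsLocalRing.ResidueField R)) := by
      change Function.Injective (f.baseChange (IsLocalRing.ResidueField R))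
      rw [injective_iff_map_eq_zero]
      intro t ht
      by_contra hne
      obtain ⟨w, hw⟩ := Module.Projective.exists_dual_ne_zero (IsLocalRing.ResidueField R) hne
      obtain ⟨v, hv⟩ := (lift_iff (S := IsLocalRing.ResidueField R) f).2 h w
      apply hw
      rw [← hv, LinearMap.comp_apply, ht, map_zero]
    obtain ⟨r, hr⟩ := (IsLocalRing.split_injective_iff_lTensor_residueField_injective f).2 hinj
    intro u
    exact ⟨u ∘ₗ r, by rw [LinearMap.comp_assoc, hr, LinearMap.comp_id]⟩
  | succ i ih =>
    intro L _ _ _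
    obtain ⟨n, g, hg⟩ := Module.Finite.exists_fin' R L
    rw [EV_shift (Submodule.subtype_injective _) (exact_subtype_ker g) hg,
      EV_shift (Submodule.subtype_injective _) (exact_subtype_ker g) hg]
    exact ih _

/-- Transport along a bijective ring homomorphism. -/
theorem EV_transport {Q S : Type} [CommRing Q] [CommRing S] [Algebra Q S]
    (hb : Function.Bijective (algebraMap Q S)) 
    (N : Type) [AddCommGroup N] [Module Q N] [Module S N] [IsScalarTower Q S N] (i : ℕ) :
    ∀ (L : Type) [AddCommGroup L] [Module Q L] [Module S L] [IsScalarTower Q S L],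
    EV S (i + 1) L N ↔ EV Q (i + 1) L N := by
  have hfree : Module.Free Q S :=
    Module.Free.of_equiv (LinearEquiv.ofBijective (Algebra.linearMap Q S) hb)
  have hproj : ∀ (F : Type) [AddCommGroup F] [Module Q F] [Module S F] [IsScalarTower Q S F]
      [Module.Free S F], Module.Projective Q F := by
    intro F _ _ _ _ _
    let b := Module.Free.chooseBasis S F
    exact Module.Projective.of_equiv (b.repr.restrictScalars Q).symm
  have hlin : ∀ {A B : Type} [AddCommGroup A] [AddCommGroup B] [Module Q A] [Module S A]
      [IsScalarTower Q S A] [Module Q B] [Module S B] [IsScalarTower Q S B] (u : A →ₗ[Q] B),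
      ∃ v : A →ₗ[S] B, v.restrictScalars Q = u := by
    intro A B _ _ _ _ _ _ _ _ u
    refine ⟨{ u with map_smul' := fun s a => ?_ }, rfl⟩
    obtain ⟨q, rfl⟩ := hb.2 s
    simp
  induction i with
  | zero =>
    intro L _ _ _ _
    obtain ⟨F, _, _, _, g, hg⟩ := exists_pres S L
    let _ : Module Q F := Module.compHom F (algebraMap Q S)
    have : IsScalarTower Q S F := ⟨fun q s y => by
      rw [Algebra.smul_def, mul_smul]; rfl⟩
    have : Module.Projective Q F := hproj F
    let g' : F →ₗ[Q] L := g.restrictScalars Q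
    let f' : LinearMap.ker g →ₗ[Q] F := (LinearMap.ker g).subtype.restrictScalars Q
    have hf' : Function.Injective f' := Submodule.subtype_injective (LinearMap.ker g)
    have hfg' : Function.Exact f' g' := exact_subtype_ker g
    have hg' : Function.Surjective g' := hg
    rw [zero_add, EV_one_iff (Submodule.subtype_injective _) (exact_subtype_ker g) hg,
      EV_one_iff hf' hfg' hg']
    constructor
    · intro h u
      obtain ⟨u', rfl⟩ := hlin u
      obtain ⟨v, rfl⟩ := h u'
      exact ⟨v.restrictScalars Q, rfl⟩
    · intro h u
      obtain ⟨v, hv⟩ := h (u.restrictScalars Q)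
      obtain ⟨v', rfl⟩ := hlin v
      exact ⟨v', LinearMap.ext fun a => LinearMap.congr_fun hv a⟩
  | succ i ih =>
    intro L _ _ _ _
    obtain ⟨F, _, _, _, g, hg⟩ := exists_pres S L
    let _ : Module Q F := Module.compHom F (algebraMap Q S)
    have : IsScalarTower Q S F := ⟨fun q s y => by
      rw [Algebra.smul_def, mul_smul]; rfl⟩
    have : Module.Projective Q F := hproj F
    let g' : F →ₗ[Q] L := g.restrictScalars Q
    let f' : LinearMap.ker g →ₗ[Q] F := (LinearMap.ker g).subtype.restrictScalars Q
    have hf' : Function.Injective f' := Submodule.subtype_injective (LinearMap.ker g)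
    have hfg' : Function.Exact f' g' := exact_subtype_ker g
    have hg' : Function.Surjective g' := hg
    rw [EV_shift (Submodule.subtype_injective _) (exact_subtype_ker g) hg,
      EV_shift hf' hfg' hg']
    exact ih _

/-- Every finitely generated module has finite projective dimension. -/
def PP (Q : Type) [CommRing Q] : Prop :=
  ∀ (M : Type) [AddCommGroup M] [Module Q M], Module.Finite Q M →
    ∃ n : ℕ, ∀ i, n < i → ∀ (N : Type) [AddCommGroup N] [Module Q N], EV Q i M N

/-- Eventual vanishing of self-extensions implies finite projective dimension. -/
def CC (Q : Type) [CommRing Q] : Prop :=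
  ∀ (M : Type) [AddCommGroup M] [Module Q M], Module.Finite Q M →
    (∃ n : ℕ, ∀ i, n < i → EV Q i M M) →
    ∃ n : ℕ, ∀ i, n < i → ∀ (N : Type) [AddCommGroup N] [Module Q N], EV Q i M N

theorem CC_of_PP {Q : Type} [CommRing Q] (h : PP Q) : CC Q := fun M _ _ hM _ => h M hM

/-- The basic exact sequences for the quotient by a regular element. -/
theorem exists_chi {Q : Type} [CommRing Q] {x : Q} {M F : Type} [AddCommGroup M] [Module Q M]
    [Module (Q ⧸ Ideal.span {x}) M] [IsScalarTower Q (Q ⧸ Ideal.span {x}) M]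
    [AddCommGroup F] [Module Q F] (hF : IsSMulRegular F x) (f : F →ₗ[Q] M)
    (hf : Function.Surjective f) :
    ∃ (W : Type) (_ : AddCommGroup W) (_ : Module (Q ⧸ Ideal.span {x}) W)
      (a : M →ₗ[Q ⧸ Ideal.span {x}] (TensorProduct Q (Q ⧸ Ideal.span {x}) (LinearMap.ker f)))
      (b : (TensorProduct Q (Q ⧸ Ideal.span {x}) (LinearMap.ker f)) →ₗ[Q ⧸ Ideal.span {x}] W)
      (c : W →ₗ[Q ⧸ Ideal.span {x}] TensorProduct Q (Q ⧸ Ideal.span {x}) F)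
      (d : TensorProduct Q (Q ⧸ Ideal.span {x}) F →ₗ[Q ⧸ Ideal.span {x}] M),
      Function.Injective a ∧ Function.Exact a b ∧ Function.Surjective b ∧
      Function.Injective c ∧ Function.Exact c d ∧ Function.Surjective d := by
  have hxS : ∀ m : M, x • m = 0 := by
    intro m
    rw [← one_smul (Q ⧸ Ideal.span {x}) m, ← smul_assoc]
    have : x • (1 : Q ⧸ Ideal.span {x}) = 0 := by
      rw [Algebra.smul_def, mul_one]
      exact Ideal.Quotient.eq_zero_iff_mem.2 (Ideal.mem_span_singleton_self x)
    rw [this, zero_smul]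
  let xF : F →ₗ[Q] LinearMap.ker f :=
    (LinearMap.lsmul Q F x).codRestrict (LinearMap.ker f) (fun y => by simp [hxS])
  have hxF : ∀ y, ((xF y : LinearMap.ker f) : F) = x • y := fun y => rfl
  let a0 : F →ₗ[Q] TensorProduct Q (Q ⧸ Ideal.span {x}) (LinearMap.ker f) :=
    TensorProduct.mk Q (Q ⧸ Ideal.span {x}) (LinearMap.ker f) 1 ∘ₗ xF
  have ha0 : ∀ y, a0 y = TensorProduct.tmul Q (1 : Q ⧸ Ideal.span {x}) (xF y) := fun y => rfl
  have hker : ∀ y, a0 y = 0 ↔ f y = 0 := by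
    intro y
    constructor
    · intro h
      obtain ⟨u, hu⟩ := one_tmul_eq_zero x _ h
      have : y = u := hF (congrArg Subtype.val hu)
      rw [this]
      exact u.2
    · intro h
      have : xF y = x • (⟨y, h⟩ : LinearMap.ker f) := rfl
      rw [ha0, this, smul_eq_zero_quot]
  have hf0 := hf
  choose σ hσ using hf
  have key : ∀ m y, f y = m → a0 (σ m) = a0 y := by
    intro m y h
    rw [← sub_eq_zero, ← map_sub, hker, map_sub, hσ, h, sub_self]
  let a : M →ₗ[Q ⧸ Ideal.span {x}] (TensorProduct Q (Q ⧸ Ideal.span {x}) (LinearMap.ker f)) :=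
    { toFun := fun m => a0 (σ m)
      map_add' := fun m m' => by
        rw [key (m + m') (σ m + σ m') (by rw [map_add, hσ, hσ]), map_add]
      map_smul' := fun s m => by
        obtain ⟨q, rfl⟩ := Ideal.Quotient.mk_surjective s
        have e1 : (Ideal.Quotient.mk (Ideal.span {x}) q) • m = q • m := by
          exact algebraMap_smul (Q ⧸ Ideal.span {x}) q m
        have e2 : (Ideal.Quotient.mk (Ideal.span {x}) q) • a0 (σ m) = q • a0 (σ m) := by
          exact algebraMap_smul (Q ⧸ Ideal.span {x}) q (a0 (σ m))
        rw [RingHom.id_apply, e2, ← map_smul]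
        exact key _ _ (by rw [map_smul, hσ, e1]) }
  have ha : ∀ y, a (f y) = a0 y := fun y => key _ _ rfl
  let d := f.liftBaseChange (Q ⧸ Ideal.span {x})
  have hd : ∀ y, d (TensorProduct.tmul Q 1 y) = f y := fun y => by simp [d]
  let ι := (LinearMap.ker f).subtype.baseChange (Q ⧸ Ideal.span {x})
  have hι : ∀ k, ι (TensorProduct.tmul Q 1 k) = TensorProduct.tmul Q 1 (k : F) := fun k => rfl
  let b := ι.codRestrict (LinearMap.ker d) (fun t => by
    obtain ⟨k, rfl⟩ := exists_one_tmul _ t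
    rw [hι, LinearMap.mem_ker, hd]
    exact k.2)
  have hb : ∀ t, (b t : TensorProduct Q (Q ⧸ Ideal.span {x}) F) = ι t := fun t => rfl
  refine ⟨LinearMap.ker d, inferInstance, inferInstance, a, b, (LinearMap.ker d).subtype, d,
    ?_, ?_, ?_, Submodule.subtype_injective _, exact_subtype_ker d, ?_⟩
  · rw [injective_iff_map_eq_zero]
    intro m hm
    have := (hker (σ m)).1 hm
    rwa [hσ] at this
  · intro t
    constructor
    · intro h
      obtain ⟨k, rfl⟩ := exists_one_tmul _ t
      have h2 := congrArg Subtype.val h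
      rw [hb, hι] at h2
      obtain ⟨u, hu⟩ := one_tmul_eq_zero x _ h2
      refine ⟨f u, ?_⟩
      rw [ha, ha0]
      congr 1
      exact Subtype.ext hu.symm
    · rintro ⟨m, rfl⟩
      apply Subtype.ext
      rw [← hσ m, ha, hb, ha0, hι, hxF, smul_eq_zero_quot]
      rfl
  · rintro ⟨t, ht⟩
    obtain ⟨y, rfl⟩ := exists_one_tmul _ t
    rw [LinearMap.mem_ker, hd] at ht
    exact ⟨TensorProduct.tmul Q 1 ⟨y, ht⟩, Subtype.ext rfl⟩
  · intro m
    obtain ⟨y, rfl⟩ := hf0 m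
    exact ⟨TensorProduct.tmul Q 1 y, hd y⟩

theorem CC_quot {Q : Type} [CommRing Q] [IsNoetherianRing Q] {x : Q} (hx : IsSMulRegular Q x)
    (h : CC Q) : CC (Q ⧸ Ideal.span {x}) := by
  intro M _ _ hM hMM
  let _ : Module Q M := Module.compHom M (algebraMap Q (Q ⧸ Ideal.span {x}))
  have : IsScalarTower Q (Q ⧸ Ideal.span {x}) M := ⟨fun q s y => by
      rw [Algebra.smul_def, mul_smul]; rfl⟩
  have hMQ : Module.Finite Q M := Module.Finite.trans (Q ⧸ Ideal.span {x}) M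
  obtain ⟨r, f, hf⟩ := Module.Finite.exists_fin' Q M
  have hF : IsSMulRegular (Fin r → Q) x := isSMulRegular_free hx _
  obtain ⟨W, _, _, a, b, c, d, ha, hab, hb, hc, hcd, hd⟩ := exists_chi hF f hf
  have hK : IsSMulRegular (LinearMap.ker f) x := hF.submodule _ _
  have hQ : ∃ n : ℕ, ∀ i, n < i → EV Q i M M := by
    obtain ⟨n, hn⟩ := hMM
    refine ⟨n + 1, fun i hi => ?_⟩
    obtain ⟨j, rfl⟩ : ∃ j, i = j + 2 := ⟨i - 2, by omega⟩
    rw [EV_shift (Submodule.subtype_injective _) (exact_subtype_ker f) hf, ← EV_quot hx M j _ hK]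
    refine EV_contra_mid ha hab hb _ (hn _ (by omega)) ?_
    rw [← EV_shift hc hcd hd]
    exact hn _ (by omega)
  obtain ⟨n, hn⟩ := h M hMQ hQ
  refine ⟨n + 1, fun i hi N _ _ => ?_⟩
  refine EV_chi ha hab hb hc hcd hd hMM (n + 1) ?_ i hi
  intro i hi
  let _ : Module Q N := Module.compHom N (algebraMap Q (Q ⧸ Ideal.span {x}))
  have : IsScalarTower Q (Q ⧸ Ideal.span {x}) N := ⟨fun q s y => by
      rw [Algebra.smul_def, mul_smul]; rfl⟩
  obtain ⟨j, rfl⟩ : ∃ j, i = j + 1 := ⟨i - 1, by omega⟩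
  rw [EV_quot hx N j _ hK, ← EV_shift (Submodule.subtype_injective _) (exact_subtype_ker f) hf]
  exact hn _ (by omega) N

open Pointwise in
theorem wr_cons {Q : Type} [CommRing Q] (x : Q) (g : List Q)
    (h : RingTheory.Sequence.IsWeaklyRegular Q (x :: g)) :
    IsSMulRegular Q x ∧ RingTheory.Sequence.IsWeaklyRegular (Q ⧸ Ideal.span {x})
      (g.map (Ideal.Quotient.mk (Ideal.span {x}))) := by
  rw [RingTheory.Sequence.isWeaklyRegular_cons_iff] at h
  refine ⟨h.1, ?_⟩
  have e : (x • (⊤ : Submodule Q Q)) = Ideal.span {x} := by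
    rw [← Submodule.ideal_span_singleton_smul]
    simp
  exact (RingTheory.Sequence.isWeaklyRegular_map_algebraMap_iff (Q ⧸ Ideal.span {x}) _ g).2
    (((Submodule.quotEquivOfEq _ _ e).isWeaklyRegular_congr g).1 h.2)

theorem setOf_mem_map {Q S : Type} [CommRing Q] [CommRing S] (φ : Q →+* S) (g : List Q) :
    Ideal.span {y | y ∈ g.map φ} = (Ideal.span {y | y ∈ g}).map φ := by
  rw [Ideal.map_span]
  congr 1
  ext y
  simp

theorem span_cons {Q : Type} [CommRing Q] (x : Q) (g : List Q) :
    Ideal.span {y | y ∈ x :: g} = Ideal.span {x} ⊔ Ideal.span {y | y ∈ g} := by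
  rw [← Ideal.span_union]
  congr 1
  ext y
  simp

theorem CC_list (n : ℕ) : ∀ (Q : Type) [CommRing Q] [IsNoetherianRing Q], CC Q →
    ∀ f : List Q, f.length = n → RingTheory.Sequence.IsWeaklyRegular Q f →
    ∀ (S : Type) [CommRing S] (φ : Q →+* S), Function.Surjective φ →
    RingHom.ker φ = Ideal.span {y | y ∈ f} → CC S := by
  induction n with
  | zero =>
    intro Q _ _ hQ f hf _ S _ φ hφ hker
    rw [List.length_eq_zero_iff] at hf
    subst hf
    have hinj : Function.Injective φ := by
      rw [RingHom.injective_iff_ker_eq_bot, hker]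
      simp
    let _ : Algebra Q S := φ.toAlgebra
    have hb : Function.Bijective (algebraMap Q S) := ⟨hinj, hφ⟩
    intro M _ _ hM hMM
    let _ : Module Q M := Module.compHom M (algebraMap Q S)
    have : IsScalarTower Q S M := ⟨fun q s y => by
      rw [Algebra.smul_def, mul_smul]; rfl⟩
    have : Module.Finite Q S := Module.Finite.of_surjective (Algebra.linearMap Q S) hφ
    have hMQ : Module.Finite Q M := Module.Finite.trans S M
    obtain ⟨n, hn⟩ := hMM
    obtain ⟨k, hk⟩ := hQ M hMQ ⟨n, fun i hi => by
      obtain ⟨j, rfl⟩ : ∃ j, i = j + 1 := ⟨i - 1, by omega⟩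
      exact (EV_transport hb M j M).1 (hn _ hi)⟩
    refine ⟨k, fun i hi N _ _ => ?_⟩
    let _ : Module Q N := Module.compHom N (algebraMap Q S)
    have : IsScalarTower Q S N := ⟨fun q s y => by
      rw [Algebra.smul_def, mul_smul]; rfl⟩
    obtain ⟨j, rfl⟩ : ∃ j, i = j + 1 := ⟨i - 1, by omega⟩
    exact (EV_transport hb N j M).2 (hk _ hi N)
  | succ n ih =>
    intro Q _ _ hQ f hf hreg S _ φ hφ hker
    match f, hf, hreg, hker with
    | x :: g, hf, hreg, hker =>
      obtain ⟨hx, hreg'⟩ := wr_cons x g hreg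
      have hxk : ∀ a ∈ Ideal.span {x}, φ a = 0 := by
        intro a ha
        rw [← RingHom.mem_ker, hker, span_cons]
        exact Ideal.mem_sup_left ha
      refine ih (Q ⧸ Ideal.span {x}) (CC_quot hx hQ) (g.map (Ideal.Quotient.mk _))
        (by simpa using hf) hreg' S (Ideal.Quotient.lift _ φ hxk)
        (Ideal.Quotient.lift_surjective_of_surjective _ _ hφ) ?_
      have hkl : RingHom.ker (Ideal.Quotient.lift (Ideal.span {x}) φ hxk) =
          (RingHom.ker φ).map (Ideal.Quotient.mk (Ideal.span {x})) :=
        Ideal.ker_quotient_lift φ hxk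
      rw [setOf_mem_map, hkl, hker, span_cons, Ideal.map_sup, Ideal.map_quotient_self, bot_sup_eq]

theorem PP_reg (n : ℕ) : ∀ (Q : Type) [CommRing Q] [IsNoetherianRing Q] [IsLocalRing Q],
    ∀ g : List Q, g.length = n → RingTheory.Sequence.IsWeaklyRegular Q g →
    Ideal.span {y | y ∈ g} = IsLocalRing.maximalIdeal Q → PP Q := by
  induction n with
  | zero =>
    intro Q _ _ _ g hg _ hm
    rw [List.length_eq_zero_iff] at hg
    subst hg
    have hm' : IsLocalRing.maximalIdeal Q = ⊥ := by rw [← hm]; simp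
    have hfield : IsField Q := IsLocalRing.isField_iff_maximalIdeal_eq.2 hm'
    let _ : Field Q := hfield.toField
    intro M _ _ hM
    refine ⟨0, fun i hi N _ _ => ?_⟩
    obtain ⟨j, rfl⟩ : ∃ j, i = j + 1 := ⟨i - 1, by omega⟩
    have : Module.Projective Q M := Module.Projective.of_free
    exact EV_of_projective j M N
  | succ n ih =>
    intro Q _ _ _ g hg hreg hm
    match g, hg, hreg, hm with
    | x :: g, hg, hreg, hm =>
      obtain ⟨hx, hreg'⟩ := wr_cons x g hreg
      have hxm : Ideal.span {x} ≤ IsLocalRing.maximalIdeal Q := by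
        rw [← hm, span_cons]
        exact le_sup_left
      have hnt : Nontrivial (Q ⧸ Ideal.span {x}) := Ideal.Quotient.nontrivial_iff.2
        (ne_top_of_le_ne_top (IsLocalRing.maximalIdeal.isMaximal Q).ne_top hxm)
      have hloc : IsLocalRing (Q ⧸ Ideal.span {x}) :=
        IsLocalRing.of_surjective' (Ideal.Quotient.mk _) Ideal.Quotient.mk_surjective
      have hS : PP (Q ⧸ Ideal.span {x}) := by
        refine ih (Q ⧸ Ideal.span {x}) (g.map (Ideal.Quotient.mk _)) (by simpa using hg) hreg' ?_
        rw [setOf_mem_map]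
        have h1 : (Ideal.span {y | y ∈ g}).map (Ideal.Quotient.mk (Ideal.span {x})) =
            (IsLocalRing.maximalIdeal Q).map (Ideal.Quotient.mk (Ideal.span {x})) := by
          rw [← hm, span_cons, Ideal.map_sup, Ideal.map_quotient_self, bot_sup_eq]
        rw [h1]
        exact IsLocalRing.map_maximalIdeal_of_surjective _ Ideal.Quotient.mk_surjective
      intro M _ _ hM
      obtain ⟨r, f, hf⟩ := Module.Finite.exists_fin' Q M
      have hF : IsSMulRegular (Fin r → Q) x := isSMulRegular_free hx _
      have hK : IsSMulRegular (LinearMap.ker f) x := hF.submodule _ _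
      obtain ⟨k, hk⟩ := hS (TensorProduct Q (Q ⧸ Ideal.span {x}) (LinearMap.ker f)) inferInstance
      have hxk : ∀ a ∈ Ideal.span {x}, IsLocalRing.residue Q a = 0 := by
        intro a ha
        exact (IsLocalRing.residue_eq_zero_iff a).2 (hxm ha)
      let _ : Module (Q ⧸ Ideal.span {x}) (IsLocalRing.ResidueField Q) :=
        Module.compHom _ (Ideal.Quotient.lift _ (IsLocalRing.residue Q) hxk)
      have : IsScalarTower Q (Q ⧸ Ideal.span {x}) (IsLocalRing.ResidueField Q) :=
        ⟨fun q s y => by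
          obtain ⟨s, rfl⟩ := Ideal.Quotient.mk_surjective s
          change IsLocalRing.residue Q (q * s) * y = IsLocalRing.residue Q q *
            (IsLocalRing.residue Q s * y)
          rw [map_mul, mul_assoc]⟩
      refine ⟨k + 1, fun i hi N _ _ => ?_⟩
      obtain ⟨j, rfl⟩ : ∃ j, i = j + 2 := ⟨i - 2, by omega⟩
      rw [EV_shift (Submodule.subtype_injective _) (exact_subtype_ker f) hf]
      apply EV_of_residueField
      rw [← EV_quot hx _ j _ hK]
      exact hk _ (by omega) _

theorem fflat_completion (R : Type) [CommRing R] [IsNoetherianRing R] [IsLocalRing R] :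
    Module.FaithfullyFlat R (AdicCompletion (IsLocalRing.maximalIdeal R) R) := by
  refine { submodule_ne_top := ?_ }
  intro m hm h
  have hm' := IsLocalRing.eq_maximalIdeal hm
  subst hm'
  have h1 : (1 : AdicCompletion (IsLocalRing.maximalIdeal R) R) ∈
      (IsLocalRing.maximalIdeal R) • (⊤ : Submodule R _) := by rw [h]; trivial
  let ev : AdicCompletion (IsLocalRing.maximalIdeal R) R →ₗ[R] _ :=
    AdicCompletion.eval (IsLocalRing.maximalIdeal R) R 1
  have h2 : ev 1 = 0 := by
    have : (IsLocalRing.maximalIdeal R) • (⊤ : Submodule R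
        (AdicCompletion (IsLocalRing.maximalIdeal R) R)) ≤ LinearMap.ker ev := by
      rw [Submodule.smul_le]
      intro r hr y _
      rw [LinearMap.mem_ker, map_smul]
      obtain ⟨z, hz⟩ := Submodule.Quotient.mk_surjective _ (ev y)
      rw [← hz, ← Submodule.Quotient.mk_smul, Submodule.Quotient.mk_eq_zero]
      rw [pow_one]
      exact Submodule.smul_mem_smul hr trivial
    exact this h1
  have h3 : (Submodule.Quotient.mk (1 : R) : R ⧸ ((IsLocalRing.maximalIdeal R) ^ 1 • ⊤ : Submodule R R)) = 0 := h2
  rw [Submodule.Quotient.mk_eq_zero, pow_one] at h3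
  simp at h3

theorem down {R : Type} [CommRing R] [IsNoetherianRing R] [IsLocalRing R] {M : Type}
    [AddCommGroup M] [Module R M] [Module.Finite R M] (hR : ∀ i, 0 < i → EV R i M R) (n : ℕ) :
    (∀ i, n < i → ∀ (N : Type) [AddCommGroup N] [Module R N], EV R i M N) →
    (∀ i, 0 < i → ∀ (N : Type) [AddCommGroup N] [Module R N], EV R i M N) := by
  induction n with
  | zero => exact id
  | succ n ih =>
    intro h
    apply ih
    intro i hi N _ _
    obtain h1 | h1 : n + 1 < i ∨ i = n + 1 := by omega
    · exact h i h1 N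
    · subst h1
      apply EV_of_residueField
      let q : R →ₗ[R] IsLocalRing.ResidueField R := Algebra.linearMap R _
      have hq : Function.Surjective q := IsLocalRing.residue_surjective
      exact EV_cov_right (Submodule.subtype_injective _) (exact_subtype_ker q) hq (n + 1)
        (hR _ (by omega)) (h _ (by omega) _)

theorem stmt_16_aux (R : Type) [CommRing R] [IsNoetherianRing R] [IsLocalRing R]
    (hCI : ∃ (Q : Type) (_ : CommRing Q) (_ : IsNoetherianRing Q) (_ : IsLocalRing Q),
      (∃ g : List Q, RingTheory.Sequence.IsRegular Q g ∧
        Ideal.span {y | y ∈ g} = IsLocalRing.maximalIdeal Q) ∧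
      ∃ f : List Q, RingTheory.Sequence.IsRegular Q f ∧
        Nonempty ((AdicCompletion (IsLocalRing.maximalIdeal R) R) ≃+*
          (Q ⧸ Ideal.span {y | y ∈ f})) ) (M : ModuleCat.{0} R) (hM : Module.Finite R M)
    (h1 : ∀ i : ℕ, 0 < i → Subsingleton (ExtGroup R M (ModuleCat.of R R) i))
    (h2 : ∃ N : ℕ, ∀ i : ℕ, N < i → Subsingleton (ExtGroup R M M i)) :
    ∀ i : ℕ, 0 < i → Subsingleton (ExtGroup R M M i) := by
  obtain ⟨Q, _, _, _, ⟨g, hg, hgm⟩, f, hf, ⟨e⟩⟩ := hCI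
  have hS : CC (AdicCompletion (IsLocalRing.maximalIdeal R) R) := by
    refine CC_list _ Q (CC_of_PP (PP_reg _ Q g rfl hg.toIsWeaklyRegular hgm)) f rfl
      hf.toIsWeaklyRegular _ (e.symm.toRingHom.comp (Ideal.Quotient.mk _))
      (e.symm.surjective.comp Ideal.Quotient.mk_surjective) ?_
    ext y
    rw [RingHom.mem_ker, RingHom.comp_apply]
    rw [← Ideal.Quotient.eq_zero_iff_mem]
    exact e.symm.map_eq_zero_iff
  have := fflat_completion R
  obtain ⟨n, hn⟩ := h2
  obtain ⟨k, hk⟩ := hS (TensorProduct R (AdicCompletion (IsLocalRing.maximalIdeal R) R) M)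
    inferInstance ⟨n, fun i hi => by
      obtain ⟨j, rfl⟩ : ∃ j, i = j + 1 := ⟨i - 1, by omega⟩
      exact (EV_fflat _ M j M).2 ((EV_iff_ExtGroup M M _ (by omega)).1 (hn _ hi))⟩
  have hall : ∀ i, k < i → ∀ (N : Type) [AddCommGroup N] [Module R N], EV R i M N := by
    intro i hi N _ _
    obtain ⟨j, rfl⟩ : ∃ j, i = j + 1 := ⟨i - 1, by omega⟩
    exact (EV_fflat _ N j M).1 (hk _ hi _)
  have hR : ∀ i, 0 < i → EV R i M R := fun i hi =>
    (EV_iff_ExtGroup M (ModuleCat.of R R) i hi).1 (h1 i hi)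
  intro i hi
  exact (EV_iff_ExtGroup M M i hi).2 (down hR k hall i hi M)

/-- Every local complete intersection satisfies (SAC): if the Noetherian local ring `R`
has completion isomorphic to `Q/(f₁,…,f_c)` with `Q` a regular local ring (Noetherian
local with maximal ideal generated by a regular sequence) and `f₁,…,f_c` a
`Q`-regular sequence, then `R` satisfies (SAC). -/
theorem stmt_16 (R : Type) [CommRing R] [IsNoetherianRing R] [IsLocalRing R]
    (hCI : ∃ (Q : Type) (_ : CommRing Q) (_ : IsNoetherianRing Q) (_ : IsLocalRing Q),
      (∃ g : List Q, RingTheory.Sequence.IsRegular Q g ∧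
        Ideal.span {y | y ∈ g} = IsLocalRing.maximalIdeal Q) ∧
      ∃ f : List Q, RingTheory.Sequence.IsRegular Q f ∧
        Nonempty ((AdicCompletion (IsLocalRing.maximalIdeal R) R) ≃+*
          (Q ⧸ Ideal.span {y | y ∈ f})) ) :
    SAC R := by
  exact fun M hM h1 h2 => stmt_16_aux R hCI M hM h1 h2
end

section
/- Let R be a commutative Noetherian ring of finite Krull dimension. Then R satisfies (SAC) if and only if rfed(R) ≤ dim R, which also holds if and only if rfed(R) < ∞. -/
open CategoryTheory

/-- The self-extension degree `ext.deg M = sup { i | Ext^i(M,M) ≠ 0 }`, in `ℕ∞`. -/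
noncomputable def extDeg (R : Type) [CommRing R] (M : ModuleCat.{0} R) : ℕ∞ :=
  sSup {n : ℕ∞ | ∃ i : ℕ, n = i ∧ ¬ Subsingleton (ExtGroup R M M i)}

/-- The restricted finitistic extension degree
`rfed R = sup { ext.deg (M ⊕ R) | M f.g., ext.deg (M ⊕ R) < ∞ }`. -/
noncomputable def rfed (R : Type) [CommRing R] : ℕ∞ :=
  sSup {n : ℕ∞ | ∃ M : ModuleCat.{0} R, Module.Finite R M ∧
    extDeg R (ModuleCat.of R (M × R)) < ⊤ ∧ n = extDeg R (ModuleCat.of R (M × R))}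

namespace SACProof
open Abelian
variable {R : Type} [CommRing R]

/-- Vanishing of `Ext^i(M,N)`. -/
abbrev V (M N : ModuleCat.{0} R) (i : ℕ) : Prop := Subsingleton (Abelian.Ext M N i)

lemma V_of (M N : ModuleCat.{0} R) (i : ℕ) (h : ∀ e : Abelian.Ext M N i, e = 0) : V M N i :=
  subsingleton_of_forall_eq 0 h

lemma V.z {M N : ModuleCat.{0} R} {i : ℕ} (h : V M N i) (e : Abelian.Ext M N i) : e = 0 :=
  Subsingleton.elim _ _

lemma V_retract_right {X Y Y' : ModuleCat.{0} R} {i : ℕ} (a : Y ⟶ Y') (b : Y' ⟶ Y)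
    (hab : a ≫ b = 𝟙 Y) (h : V X Y' i) : V X Y i := by
  refine V_of _ _ _ fun e => ?_
  have : e = (e.comp (Ext.mk₀ a) (add_zero i)).comp (Ext.mk₀ b) (add_zero i) := by
    rw [Ext.comp_assoc_of_second_deg_zero, Ext.mk₀_comp_mk₀, hab, Ext.comp_mk₀_id]
  rw [this, h.z (e.comp _ _), Ext.zero_comp]

lemma V_retract_left {X X' Y : ModuleCat.{0} R} {i : ℕ} (a : X ⟶ X') (b : X' ⟶ X)
    (hab : a ≫ b = 𝟙 X) (h : V X' Y i) : V X Y i := by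
  refine V_of _ _ _ fun e => ?_
  have : e = (Ext.mk₀ a).comp ((Ext.mk₀ b).comp e (zero_add i)) (zero_add i) := by
    rw [Ext.mk₀_comp_mk₀_assoc, hab, Ext.mk₀_id_comp]
  rw [this, h.z ((Ext.mk₀ b).comp e _), Ext.comp_zero]

abbrev pr (M N : ModuleCat.{0} R) : ModuleCat.{0} R := ModuleCat.of R (M × N)
abbrev i1 (M N : ModuleCat.{0} R) : M ⟶ pr M N := ModuleCat.ofHom (LinearMap.inl R M N)
abbrev i2 (M N : ModuleCat.{0} R) : N ⟶ pr M N := ModuleCat.ofHom (LinearMap.inr R M N)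
abbrev p1 (M N : ModuleCat.{0} R) : pr M N ⟶ M := ModuleCat.ofHom (LinearMap.fst R M N)
abbrev p2 (M N : ModuleCat.{0} R) : pr M N ⟶ N := ModuleCat.ofHom (LinearMap.snd R M N)

lemma total (M N : ModuleCat.{0} R) : p1 M N ≫ i1 M N + p2 M N ≫ i2 M N = 𝟙 (pr M N) := by
  ext x <;> simp

lemma V_pr_right {X M N : ModuleCat.{0} R} {i : ℕ} : V X (pr M N) i ↔ V X M i ∧ V X N i := by
  constructor
  · intro h
    exact ⟨V_retract_right (i1 M N) (p1 M N) (by ext; simp) h,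
      V_retract_right (i2 M N) (p2 M N) (by ext; simp) h⟩
  · rintro ⟨h1, h2⟩
    refine V_of _ _ _ fun e => ?_
    rw [← Ext.comp_mk₀_id e, ← total, Ext.mk₀_add, Ext.comp_add, ← Ext.mk₀_comp_mk₀,
      ← Ext.mk₀_comp_mk₀, ← Ext.comp_assoc_of_second_deg_zero,
      ← Ext.comp_assoc_of_second_deg_zero, h1.z (e.comp _ _), h2.z (e.comp _ _),
      Ext.zero_comp, Ext.zero_comp, add_zero]

lemma V_pr_left {M N Y : ModuleCat.{0} R} {i : ℕ} : V (pr M N) Y i ↔ V M Y i ∧ V N Y i := by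
  constructor
  · intro h
    exact ⟨V_retract_left (i1 M N) (p1 M N) (by ext; simp) h,
      V_retract_left (i2 M N) (p2 M N) (by ext; simp) h⟩
  · rintro ⟨h1, h2⟩
    refine V_of _ _ _ fun e => ?_
    rw [← Ext.mk₀_id_comp e, ← total, Ext.mk₀_add, Ext.add_comp, 
      ← Ext.mk₀_comp_mk₀_assoc, ← Ext.mk₀_comp_mk₀_assoc, h1.z ((Ext.mk₀ _).comp e _),
      h2.z ((Ext.mk₀ _).comp e _), Ext.comp_zero, Ext.comp_zero, add_zero]

lemma pi_total {s : Type} [Fintype s] [DecidableEq s] :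
    𝟙 (ModuleCat.of R (s → R)) = ∑ a : s, (ModuleCat.ofHom (LinearMap.proj a : (s → R) →ₗ[R] R) ≫
      ModuleCat.ofHom (LinearMap.single R (fun _ => R) a)) := by
  ext1
  rw [ModuleCat.hom_sum]
  refine LinearMap.ext fun x => ?_
  simp only [ModuleCat.hom_id, ModuleCat.hom_comp, LinearMap.sum_apply]
  exact (Finset.univ_sum_single x).symm

lemma comp_pi {X : ModuleCat.{0} R} {s : Type} [Fintype s] {i : ℕ}
    (e : Abelian.Ext X (ModuleCat.of R (s → R)) i)
    (h : ∀ a : s, e.comp (Ext.mk₀ (ModuleCat.ofHom (LinearMap.proj a : (s → R) →ₗ[R] R)))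
      (add_zero i) = 0) : e = 0 := by
  classical
  rw [← Ext.comp_mk₀_id e, pi_total, Ext.mk₀_sum, Ext.comp_sum]
  refine Finset.sum_eq_zero fun a _ => ?_
  rw [← Ext.mk₀_comp_mk₀, ← Ext.comp_assoc_of_second_deg_zero, h a, Ext.zero_comp]

lemma V_pi {X : ModuleCat.{0} R} {s : Type} [Fintype s] {i : ℕ}
    (h : V X (ModuleCat.of R R) i) : V X (ModuleCat.of R (s → R)) i :=
  V_of _ _ _ fun e => comp_pi e fun _ => h.z _

lemma V_proj {X Y : ModuleCat.{0} R} (h : Projective X) {i : ℕ} (hi : 0 < i) : V X Y i :=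
  HasProjectiveDimensionLT.subsingleton X 1 i hi Y

section syz

lemma V_shift_left {S : ShortComplex (ModuleCat.{0} R)} (hS : S.ShortExact)
    (hP : Projective S.X₂) (L : ModuleCat.{0} R) {i : ℕ} (hi : 0 < i) :
    V S.X₁ L i ↔ V S.X₃ L (i+1) := by
  constructor
  · intro h
    refine V_of _ _ _ fun e => ?_
    obtain ⟨y, rfl⟩ := Ext.contravariant_sequence_exact₃ hS L e ((V_proj hP (by omega)).z _)
      (add_comm 1 i)
    rw [h.z y, Ext.comp_zero]
  · intro h
    refine V_of _ _ _ fun e => ?_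
    obtain ⟨y, rfl⟩ := Ext.contravariant_sequence_exact₁ hS L e (add_comm 1 i) (h.z _)
    rw [(V_proj hP hi).z y, Ext.comp_zero]

lemma V_shift_right {S : ShortComplex (ModuleCat.{0} R)} (hS : S.ShortExact)
    {X : ModuleCat.{0} R} {i : ℕ} (h0 : V X S.X₂ i) (h1 : V X S.X₂ (i+1)) :
    V X S.X₃ i ↔ V X S.X₁ (i+1) := by
  constructor
  · intro h
    refine V_of _ _ _ fun e => ?_
    obtain ⟨y, rfl⟩ := Ext.covariant_sequence_exact₁ X hS e (h1.z _) rfl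
    rw [h.z y, Ext.zero_comp]
  · intro h
    refine V_of _ _ _ fun e => ?_
    obtain ⟨y, rfl⟩ := Ext.covariant_sequence_exact₃ X hS e rfl (h.z _)
    rw [h0.z y, Ext.zero_comp]

lemma proj_of_V {S : ShortComplex (ModuleCat.{0} R)} (hS : S.ShortExact)
    (hP : Projective S.X₂) (h : V S.X₃ S.X₁ 1) : Projective S.X₃ := by
  obtain ⟨f', hf'⟩ := Ext.covariant_sequence_exact₃ S.X₃ hS (Ext.mk₀ (𝟙 S.X₃)) (zero_add 1) (h.z _)
  obtain ⟨f, hf⟩ := (Ext.mk₀_bijective S.X₃ S.X₂).2 f'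
  rw [← hf, Ext.mk₀_comp_mk₀, (Ext.mk₀_bijective _ _).1.eq_iff] at hf'
  exact (Retract.mk f S.g hf').projective

end syz

/-- A syzygy. -/
lemma exists_syz [IsNoetherianRing R] (M : ModuleCat.{0} R) (hM : Module.Finite R M) :
    ∃ (K : ModuleCat.{0} R) (n : ℕ) (f : K ⟶ ModuleCat.of R (Fin n → R))
      (g : ModuleCat.of R (Fin n → R) ⟶ M) (w : f ≫ g = 0),
      (ShortComplex.mk f g w).ShortExact ∧ Module.Finite R K := by
  obtain ⟨n, f, hf⟩ := Module.Finite.exists_fin' R M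
  exact ⟨_, n, _, _, _, LinearMap.shortExact_shortComplexKer hf,
    inferInstanceAs (Module.Finite R (LinearMap.ker f))⟩

lemma pi_projective (n : ℕ) : Projective (ModuleCat.of R (Fin n → R)) :=
  ModuleCat.projective_of_categoryTheory_projective _

/-- SAC in terms of the derived category Ext. -/
def SAC' (R : Type) [CommRing R] : Prop :=
  ∀ M : ModuleCat.{0} R, Module.Finite R M →
    (∀ i : ℕ, 0 < i → V M (ModuleCat.of R R) i) →
    (∃ N : ℕ, ∀ i : ℕ, N < i → V M M i) →
    ∀ i : ℕ, 0 < i → V M M i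

lemma syz_props [IsNoetherianRing R] (M : ModuleCat.{0} R) (hM : Module.Finite R M) :
    ∃ K : ModuleCat.{0} R, Module.Finite R K ∧
      (∀ L i, 0 < i → (V K L i ↔ V M L (i+1))) ∧
      (∀ X i, V X (ModuleCat.of R R) i → V X (ModuleCat.of R R) (i+1) →
        (V X M i ↔ V X K (i+1))) ∧
      (V M K 1 → Projective M) ∧
      (∀ p, HasProjectiveDimensionLE K p → HasProjectiveDimensionLE M (p+1)) := by
  obtain ⟨K, n, f, g, w, hS, hK⟩ := exists_syz M hM
  refine ⟨K, hK, fun L i hi => V_shift_left hS (pi_projective n) L hi,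
    fun X i h0 h1 => V_shift_right hS (V_pi h0) (V_pi h1), proj_of_V hS (pi_projective n), ?_⟩
  intro p hp
  exact (hS.hasProjectiveDimensionLT_X₃_iff p (pi_projective n)).2 hp

lemma pd_of_SAC [IsNoetherianRing R] (h : SAC' R) (n : ℕ) : ∀ (M : ModuleCat.{0} R),
    Module.Finite R M → (∀ i, n < i → V M (ModuleCat.of R R) i) →
    (∃ N : ℕ, ∀ i : ℕ, N < i → V M M i) → ∃ p, HasProjectiveDimensionLE M p := by
  induction n with
  | zero =>
    intro M hM h1 h2
    have h3 := h M hM h1 h2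
    obtain ⟨K, hK, hl, hr, hp, -⟩ := syz_props M hM
    have hMK : ∀ i, 1 < i → V M K i := by
      intro i hi
      obtain ⟨j, rfl⟩ : ∃ j, i = j + 1 := ⟨i-1, by omega⟩
      exact (hr M j (h1 _ (by omega)) (h1 _ (by omega))).1 (h3 _ (by omega))
    have := h (pr M K) inferInstance
      (fun i hi => V_pr_left.2 ⟨h1 i hi, (hl _ i hi).2 (h1 _ (by omega))⟩)
      ⟨1, fun i hi => V_pr_left.2 ⟨V_pr_right.2 ⟨h3 _ (by omega), hMK _ hi⟩,
        V_pr_right.2 ⟨(hl _ i (by omega)).2 (h3 _ (by omega)),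
          (hl _ i (by omega)).2 (hMK _ (by omega))⟩⟩⟩ 1 one_pos
    have := hp (V_pr_right.1 (V_pr_left.1 this).1).2
    exact ⟨0, (projective_iff_hasProjectiveDimensionLE_zero M).1 this⟩
  | succ n ih =>
    intro M hM h1 ⟨N, h2⟩
    obtain ⟨K, hK, hl, hr, -, hp⟩ := syz_props M hM
    obtain ⟨p, hp'⟩ := ih K hK (fun i hi => (hl _ i (by omega)).2 (h1 _ (by omega)))
      ⟨N + n + 1, fun i hi => (hl _ i (by omega)).2
        ((hr _ i (h1 _ (by omega)) (h1 _ (by omega))).1 (h2 _ (by omega)))⟩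
    exact ⟨p+1, hp p hp'⟩

lemma grow [IsNoetherianRing R] (n : ℕ) (hn : 0 < n) (M : ModuleCat.{0} R)
    (hM : Module.Finite R M) (h1 : ∀ i, 0 < i → V M (ModuleCat.of R R) i)
    (h2 : ∀ i, n < i → V M M i) (h3 : ¬ V M M n) :
    ∃ M' : ModuleCat.{0} R, Module.Finite R M' ∧ (∀ i, 0 < i → V M' (ModuleCat.of R R) i) ∧
    (∀ i, n + 1 < i → V M' M' i) ∧ ¬ V M' M' (n+1) := by
  obtain ⟨K, hK, hl, hr, -, -⟩ := syz_props M hM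
  have hMK : ∀ i, n + 1 < i → V M K i := by
    intro i hi
    obtain ⟨j, rfl⟩ : ∃ j, i = j + 1 := ⟨i-1, by omega⟩
    exact (hr M j (h1 _ (by omega)) (h1 _ (by omega))).1 (h2 _ (by omega))
  refine ⟨pr M K, inferInstance,
    fun i hi => V_pr_left.2 ⟨h1 i hi, (hl _ i hi).2 (h1 _ (by omega))⟩,
    fun i hi => V_pr_left.2 ⟨V_pr_right.2 ⟨h2 _ (by omega), hMK _ hi⟩,
        V_pr_right.2 ⟨(hl _ i (by omega)).2 (h2 _ (by omega)),
          (hl _ i (by omega)).2 (hMK _ (by omega))⟩⟩, fun h => h3 ?_⟩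
  exact (hr M n (h1 _ hn) (h1 _ (by omega))).2 (V_pr_right.1 (V_pr_left.1 h).1).2

lemma grow_all [IsNoetherianRing R] (n : ℕ) (hn : 0 < n) (M : ModuleCat.{0} R)
    (hM : Module.Finite R M) (h1 : ∀ i, 0 < i → V M (ModuleCat.of R R) i)
    (h2 : ∀ i, n < i → V M M i) (h3 : ¬ V M M n) (k : ℕ) :
    ∃ M' : ModuleCat.{0} R, Module.Finite R M' ∧ (∀ i, 0 < i → V M' (ModuleCat.of R R) i) ∧
    (∀ i, n + k < i → V M' M' i) ∧ ¬ V M' M' (n+k) := by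
  induction k with
  | zero => exact ⟨M, hM, h1, h2, h3⟩
  | succ k ih =>
    obtain ⟨M', a, b, c, d⟩ := ih
    exact grow (n+k) (by omega) M' a b c d


section loc
variable [IsLocalRing R]
open IsLocalRing

/-- Minimal presentations over a local ring. -/
lemma exists_min_syz [IsNoetherianRing R] (M : ModuleCat.{0} R) (hM : Module.Finite R M) :
    ∃ (s : Type) (_ : Fintype s) (K : ModuleCat.{0} R) (f : K ⟶ ModuleCat.of R (s → R))
      (g : ModuleCat.of R (s → R) ⟶ M) (w : f ≫ g = 0),
      (ShortComplex.mk f g w).ShortExact ∧ Module.Finite R K ∧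
      ∀ (x : K) (a : s), (f.hom x : s → R) a ∈ maximalIdeal R := by
  classical
  have hex : ∃ n : ℕ, ∃ t : Finset M, t.card = n ∧ Submodule.span R (t : Set M) = ⊤ := by
    obtain ⟨t, ht⟩ := hM.fg_top
    exact ⟨_, t, rfl, ht⟩
  obtain ⟨t, htc, ht⟩ := Nat.find_spec hex
  have hmin : ∀ t' : Finset M, Submodule.span R (t' : Set M) = ⊤ → t.card ≤ t'.card := by
    intro t' ht'
    rw [htc]
    exact Nat.find_min' hex ⟨t', rfl, ht'⟩
  let f : (t → R) →ₗ[R] M := Fintype.linearCombination R (fun i : t => (i : M))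
  have hf : Function.Surjective f := by
    rw [← LinearMap.range_eq_top, Fintype.range_linearCombination]
    simpa using ht
  have key : ∀ x : t → R, f x = 0 → ∀ a : t, x a ∈ maximalIdeal R := by
    intro x hx a
    by_contra hu
    have hu : IsUnit (x a) := by simpa using hu
    have hsum : x a • (a : M) + ∑ b ∈ Finset.univ.erase a, x b • (b : M) = 0 := by
      rw [Finset.add_sum_erase _ (fun b : t => x b • (b : M)) (Finset.mem_univ a)]
      simpa [f, Fintype.linearCombination_apply] using hx
    have hmem : (a : M) ∈ Submodule.span R ((t.erase a : Finset M) : Set M) := by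
      have h1 : x a • (a : M) ∈ Submodule.span R ((t.erase a : Finset M) : Set M) := by
        rw [eq_neg_of_add_eq_zero_left hsum]
        refine neg_mem (Submodule.sum_mem _ fun b hb => Submodule.smul_mem _ _
          (Submodule.subset_span ?_))
        simp only [Finset.mem_erase, Finset.mem_univ, and_true] at hb
        simp only [Finset.coe_erase, Set.mem_sdiff, Finset.mem_coe, Set.mem_singleton_iff]
        exact ⟨b.2, fun h => hb (Subtype.ext h)⟩
      exact (Submodule.smul_mem_iff_of_isUnit _ hu).1 h1
    have hspan : Submodule.span R ((t.erase a : Finset M) : Set M) = ⊤ := by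
      rw [eq_top_iff, ← ht, Submodule.span_le]
      intro b hb
      by_cases hba : b = a
      · rw [hba]; exact hmem
      · exact Submodule.subset_span (by simp [hba]; exact hb)
    have := hmin _ hspan
    rw [Finset.card_erase_of_mem a.2] at this
    have : 0 < t.card := Finset.card_pos.2 ⟨_, a.2⟩
    omega
  refine ⟨t, inferInstance, _, _, _, _, LinearMap.shortExact_shortComplexKer hf,
    inferInstanceAs (Module.Finite R (LinearMap.ker f)), ?_⟩
  rintro ⟨x, hx⟩ a
  exact key x hx a


lemma smul_ext_zero {k : ModuleCat.{0} R} (hk : ∀ r ∈ maximalIdeal R, r • 𝟙 k = 0)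
    {Y : ModuleCat.{0} R} {i : ℕ} (e : Abelian.Ext k Y i) (r : R)
    (hr : r ∈ maximalIdeal R) : r • e = 0 := by
  have : r • e = (Ext.mk₀ (r • 𝟙 k)).comp e (zero_add i) := by simp [Ext.mk₀_smul]
  rw [this, hk r hr, Ext.mk₀_zero, Ext.zero_comp]

lemma comp_min_zero {k : ModuleCat.{0} R} (hk : ∀ r ∈ maximalIdeal R, r • 𝟙 k = 0)
    {K : ModuleCat.{0} R} [Module.Finite R K] (hK : Projective K)
    {s : Type} [Fintype s]
    (f : K ⟶ ModuleCat.of R (s → R)) (hf : ∀ (x : K) (a : s), (f.hom x : s → R) a ∈ maximalIdeal R)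
    {i : ℕ} (e : Abelian.Ext k K i) : e.comp (Ext.mk₀ f) (add_zero i) = 0 := by
  have hK' : Module.Projective R K := (IsProjective.iff_projective (R := R) K).2 hK
  have : Module.Free R K := Module.free_of_flat_of_isLocalRing
  refine comp_pi _ fun a => ?_
  rw [Ext.comp_assoc_of_second_deg_zero, Ext.mk₀_comp_mk₀]
  let b := Module.Free.chooseBasis R K
  let φ : K →ₗ[R] R := (LinearMap.proj a : (s → R) →ₗ[R] R) ∘ₗ f.hom
  have hφ : f ≫ ModuleCat.ofHom (LinearMap.proj a : (s → R) →ₗ[R] R) =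
      ∑ j, φ (b j) • (ModuleCat.ofHom (b.coord j) : K ⟶ ModuleCat.of R R) := by
    ext1
    rw [ModuleCat.hom_sum]
    refine b.ext fun j => ?_
    classical
    simp [LinearMap.sum_apply, Finsupp.single_apply, φ]
  rw [hφ, Ext.mk₀_sum, Ext.comp_sum]
  refine Finset.sum_eq_zero fun j _ => ?_
  rw [Ext.mk₀_smul, Ext.comp_smul]
  exact smul_ext_zero hk _ _ (hf _ _)

lemma depth_formula {k : ModuleCat.{0} R} (hk : ∀ r ∈ maximalIdeal R, r • 𝟙 k = 0)
    [IsNoetherianRing R] (t : ℕ) (h0 : ∀ i < t, V k (ModuleCat.of R R) i)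
    (ht : ¬ V k (ModuleCat.of R R) t) (p : ℕ) : ∀ (M : ModuleCat.{0} R), Module.Finite R M →
    HasProjectiveDimensionLE M p → ¬ HasProjectiveDimensionLT M p →
    p ≤ t ∧ ¬ V k M (t - p) := by
  induction p with
  | zero =>
    intro M hM h1 h2
    refine ⟨by omega, fun hV => ht ?_⟩
    have h1 := (projective_iff_hasProjectiveDimensionLE_zero M).2 h1
    have hM' : Module.Projective R M := (IsProjective.iff_projective (R := R) M).2 h1
    have : Module.Free R M := Module.free_of_flat_of_isLocalRing
    rw [hasProjectiveDimensionLT_zero_iff_isZero, ModuleCat.isZero_iff_subsingleton,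
      not_subsingleton_iff_nontrivial] at h2
    let b := Module.Free.chooseBasis R M
    obtain ⟨j⟩ := b.index_nonempty
    refine V_retract_right (Y' := M) (ModuleCat.ofHom (LinearMap.toSpanSingleton R M (b j)))
      (ModuleCat.ofHom (b.coord j)) ?_ hV
    ext
    simp
  | succ p ih =>
    intro M hM h1 h2
    obtain ⟨s, _, K, f, g, w, hS, hK, hmin⟩ := exists_min_syz M hM
    have hproj : Projective (ModuleCat.of R (s → R)) :=
      ModuleCat.projective_of_categoryTheory_projective _
    have hK1 : HasProjectiveDimensionLE K p :=
      (hS.hasProjectiveDimensionLT_X₃_iff p hproj).1 h1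
    have hK2 : ¬ HasProjectiveDimensionLT K p := fun h =>
      h2 (hS.hasProjectiveDimensionLT_X₃ p h (hasProjectiveDimensionLT_of_ge _ 1 (p+1) (by omega)))
    obtain ⟨hpt, hne⟩ := ih K hK hK1 hK2
    have hzero : ∀ e : Abelian.Ext k K (t - p), e.comp (Ext.mk₀ f) (add_zero _) = 0 := by
      intro e
      rcases Nat.eq_zero_or_pos p with rfl | hp
      · exact comp_min_zero hk ((projective_iff_hasProjectiveDimensionLE_zero K).2 hK1) f hmin e
      · exact (V_pi (h0 (t - p) (by omega))).z _
    have hlt : p ≠ t := by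
      rintro rfl
      rw [Nat.sub_self] at hne hzero
      have : Mono f := hS.mono_f
      refine hne (V_of _ _ _ fun e => Ext.postcomp_mk₀_injective_of_mono k f ?_)
      simpa using hzero e
    refine ⟨by omega, fun hV => hne (V_of _ _ _ fun e => ?_)⟩
    obtain ⟨y, rfl⟩ := Ext.covariant_sequence_exact₁ k hS e (hzero e)
      (show t - (p+1) + 1 = t - p by omega)
    rw [hV.z y, Ext.zero_comp]

lemma pd_le_local [IsNoetherianRing R] (d : ℕ) (hd : ringKrullDim R ≤ d) (M : ModuleCat.{0} R)
    (hM : Module.Finite R M) (p : ℕ) (hp : HasProjectiveDimensionLE M p) :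
    HasProjectiveDimensionLE M d := by
  let k : ModuleCat.{0} R := ModuleCat.of R (Shrink.{0} (R ⧸ maximalIdeal R))
  have hk : ∀ r ∈ maximalIdeal R, r • 𝟙 k = 0 := by
    intro r hr
    ext1
    refine LinearMap.ext fun x => ?_
    change r • x = 0
    let e := Shrink.linearEquiv R (R ⧸ maximalIdeal R)
    apply e.injective
    obtain ⟨y, hy⟩ := Ideal.Quotient.mk_surjective (e x)
    rw [map_smul, map_zero, ← hy]
    change Ideal.Quotient.mk (maximalIdeal R) (r • y) = 0
    rw [Ideal.Quotient.eq_zero_iff_mem]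
    exact Ideal.mul_mem_right _ _ hr
  have hex : ∃ t, ¬ V k (ModuleCat.of R R) t ∧ t ≤ d := by
    by_contra hcon
    have hlt : maximalIdeal R • (⊤ : Submodule R (ModuleCat.of R R)) < ⊤ := by
      rw [lt_top_iff_ne_top]
      change maximalIdeal R • (⊤ : Ideal R) ≠ ⊤
      rw [smul_eq_mul, Ideal.mul_top]
      exact Ideal.IsPrime.ne_top'
    obtain ⟨rs, hlen, hmem, hreg⟩ := ((ModuleCat.exists_isRegular_tfae (maximalIdeal R) (d+1)
      (ModuleCat.of R R) hlt).out 1 3).1 (fun i hi => by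
        by_contra h
        exact hcon ⟨i, h, by omega⟩)
    have h1 := ringKrullDim_add_length_eq_ringKrullDim_of_isRegular rs hreg
    have hnt : Nontrivial (R ⧸ Ideal.ofList rs) := by
      refine Ideal.Quotient.nontrivial_iff.2 fun h => ?_
      have hle : Ideal.ofList rs ≤ maximalIdeal R := Ideal.span_le.2 hmem
      rw [h, top_le_iff] at hle
      exact Ideal.IsPrime.ne_top' hle
    have h2 : (0 : WithBot ℕ∞) ≤ ringKrullDim (R ⧸ Ideal.ofList rs) := ringKrullDim_nonneg_of_nontrivial
    have h3 : ((d + 1 : ℕ) : WithBot ℕ∞) ≤ (d : ℕ) := by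
      rw [← hlen]
      refine le_trans ?_ (h1.le.trans hd)
      exact le_add_of_nonneg_left h2
    have h4 : d + 1 ≤ d := by exact_mod_cast h3
    omega
  classical
  let t := Nat.find hex
  obtain ⟨ht, htd⟩ := Nat.find_spec hex
  have h0 : ∀ i < t, V k (ModuleCat.of R R) i := by
    intro i hi
    by_contra h
    exact Nat.find_min hex hi ⟨h, by have : t ≤ d := htd; omega⟩
  by_cases hz : HasProjectiveDimensionLT M 0
  · exact hasProjectiveDimensionLT_of_ge _ 0 _ (by omega)
  have hex2 : ∃ q, HasProjectiveDimensionLE M q := ⟨p, hp⟩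
  have hq1 := Nat.find_spec hex2
  have hq2 : ¬ HasProjectiveDimensionLT M (Nat.find hex2) := by
    intro h
    rcases hq : Nat.find hex2 with _ | m
    · rw [hq] at h; exact hz h
    · rw [hq] at h
      exact Nat.find_min hex2 (m := m) (by omega) h
  have := (depth_formula hk t h0 ht _ M hM hq1 hq2).1
  exact hasProjectiveDimensionLT_of_ge _ (Nat.find hex2 + 1) _ (by have : t ≤ d := htd; omega)
end loc

lemma pd_le [IsNoetherianRing R] (d : ℕ) (hd : ringKrullDim R ≤ d) (M : ModuleCat.{0} R)
    (hM : Module.Finite R M) (p : ℕ) (hp : HasProjectiveDimensionLE M p) :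
    HasProjectiveDimensionLE M d := by
  rw [ModuleCat.hasProjectiveDimensionLE_iff_forall_maximalSpectrum]
  intro m
  have : IsNoetherianRing (Localization m.1.primeCompl) :=
    IsLocalization.isNoetherianRing m.1.primeCompl _ inferInstance
  have : IsLocalRing (Localization m.1.primeCompl) :=
    inferInstanceAs (IsLocalRing (Localization.AtPrime m.1))
  refine pd_le_local d ?_ _ ?_ p (M.localizedModule_hasProjectiveDimensionLE p _)
  · refine le_trans ?_ hd
    have := IsLocalization.AtPrime.ringKrullDim_eq_height m.1 (Localization.AtPrime m.1)
    exact this.trans_le (Ideal.height_le_ringKrullDim_of_ne_top (Ideal.IsPrime.ne_top'))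
  · exact Module.Finite.of_isLocalizedModule m.1.primeCompl
      (M.localizedModuleMkLinearMap m.1.primeCompl)

end SACProof

lemma extGroup_iff (R : Type) [CommRing R] (M N : ModuleCat.{0} R) (i : ℕ) :
    Subsingleton (ExtGroup R M N (i+1)) ↔ Subsingleton (Abelian.Ext M N (i+1)) := by
  let P := projectiveResolution M
  have h1 : Subsingleton (ExtGroup R M N (i+1)) ↔
      ∀ f : P.complex.X (i+1) ⟶ N, P.complex.d (i+2) (i+1) ≫ f = 0 →
        ∃ g : P.complex.X i ⟶ N, P.complex.d (i+1) i ≫ g = f := by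
    rw [← ModuleCat.isZero_iff_subsingleton, (P.isoExt (R := R) (i+1) N).isZero_iff,
      ← HomologicalComplex.exactAt_iff_isZero_homology,
      HomologicalComplex.exactAt_iff' _ i (i+1) (i+2) (by simp) (by simp),
      ShortComplex.moduleCat_exact_iff]
    rfl
  rw [h1]
  constructor
  · intro h
    refine subsingleton_of_forall_eq 0 fun e => ?_
    obtain ⟨f, hf, rfl⟩ := P.extMk_surjective e (i+2) rfl
    rw [P.extMk_eq_zero_iff f _ rfl hf i rfl]
    exact h f hf
  · intro h f hf
    rw [← P.extMk_eq_zero_iff f _ rfl hf i rfl]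
    exact Subsingleton.elim _ _

lemma SAC_iff (R : Type) [CommRing R] : SAC R ↔ SACProof.SAC' R := by
  have key : ∀ (M N : ModuleCat.{0} R) (i : ℕ), 0 < i →
      (Subsingleton (ExtGroup R M N i) ↔ SACProof.V M N i) := by
    intro M N i hi
    obtain ⟨j, rfl⟩ : ∃ j, i = j + 1 := ⟨i-1, by omega⟩
    exact extGroup_iff R M N j
  constructor
  · intro h M hM h1 ⟨N, h2⟩ i hi
    exact (key _ _ i hi).1 (h M hM (fun i hi => (key _ _ i hi).2 (h1 i hi))
      ⟨N, fun i hi => (key _ _ i (by omega)).2 (h2 i hi)⟩ i hi)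
  · intro h M hM h1 ⟨N, h2⟩ i hi
    exact (key _ _ i hi).2 (h M hM (fun i hi => (key _ _ i hi).1 (h1 i hi))
      ⟨N, fun i hi => (key _ _ i (by omega)).1 (h2 i hi)⟩ i hi)

lemma extDeg_le_iff (R : Type) [CommRing R] (M : ModuleCat.{0} R) (n : ℕ) :
    extDeg R M ≤ n ↔ ∀ i, n < i → SACProof.V M M i := by
  constructor
  · intro h i hi
    obtain ⟨j, rfl⟩ : ∃ j, i = j + 1 := ⟨i-1, by omega⟩
    rw [SACProof.V, ← extGroup_iff]
    by_contra hne
    have h1 : ((j + 1 : ℕ) : ℕ∞) ≤ extDeg R M := le_sSup ⟨j+1, rfl, hne⟩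
    have h2 : j + 1 ≤ n := by exact_mod_cast h1.trans h
    omega
  · intro h
    refine sSup_le ?_
    rintro _ ⟨i, rfl, hne⟩
    by_contra hlt
    have hi : n < i := by
      have := not_le.1 hlt
      exact_mod_cast this
    obtain ⟨j, rfl⟩ : ∃ j, i = j + 1 := ⟨i-1, by omega⟩
    exact hne ((extGroup_iff R M M j).2 (h _ hi))

lemma rfed_le_of_SAC (R : Type) [CommRing R] [IsNoetherianRing R] (h : SAC R) (d : ℕ)
    (hd : ringKrullDim R ≤ d) : rfed R ≤ d := by
  refine sSup_le ?_
  rintro _ ⟨M, hM, hlt, rfl⟩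
  obtain ⟨n, hn⟩ := ENat.ne_top_iff_exists.1 hlt.ne
  have hV := (extDeg_le_iff R (ModuleCat.of R (M × R)) n).1 hn.symm.le
  have hV' : ∀ i, n < i → SACProof.V M M i ∧ SACProof.V M (ModuleCat.of R R) i := fun i hi =>
    SACProof.V_pr_right.1 ((SACProof.V_pr_left (M := M) (N := ModuleCat.of R R)).1 (hV i hi)).1
  obtain ⟨p, hp⟩ := SACProof.pd_of_SAC ((SAC_iff R).1 h) n M hM (fun i hi => (hV' i hi).2)
    ⟨n, fun i hi => (hV' i hi).1⟩
  have hpd := SACProof.pd_le d hd M hM p hp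
  rw [extDeg_le_iff]
  intro i hi
  refine (SACProof.V_pr_left (M := M) (N := ModuleCat.of R R)).2 ⟨?_, ?_⟩
  · exact HasProjectiveDimensionLT.subsingleton M (d+1) i hi _
  · exact SACProof.V_proj (ModuleCat.projective_of_categoryTheory_projective _) (by omega)

lemma SAC_of_rfed (R : Type) [CommRing R] [IsNoetherianRing R] (h : rfed R < ⊤) : SAC R := by
  rw [SAC_iff]
  intro M hM h1 ⟨N, h2⟩
  by_contra hcon
  push Not at hcon
  obtain ⟨i, hi, hne⟩ := hcon
  rw [← not_subsingleton_iff_nontrivial] at hne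
  classical
  -- the largest degree with nonzero self-extensions
  obtain ⟨n, hn, hn1, hn2⟩ : ∃ n, 0 < n ∧ (∀ i, n < i → SACProof.V M M i) ∧
      ¬ SACProof.V M M n := by
    let n := Nat.findGreatest (fun j => ¬ SACProof.V M M j) N
    have hiN : i ≤ N := by
      by_contra hh
      exact hne (h2 i (by omega))
    have hin : i ≤ n := Nat.le_findGreatest hiN hne
    refine ⟨n, by omega, fun j hj => ?_, Nat.findGreatest_spec (P := fun j => ¬ SACProof.V M M j) hiN hne⟩
    by_cases hjN : j ≤ N
    · by_contra hc
      exact Nat.findGreatest_is_greatest hj hjN hc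
    · exact h2 j (by omega)
  obtain ⟨r, hr⟩ := ENat.ne_top_iff_exists.1 h.ne
  obtain ⟨M', a, b, c, e⟩ := SACProof.grow_all n hn M hM h1 hn1 hn2 (r + 1)
  have hproj : Projective (ModuleCat.of R R) :=
    ModuleCat.projective_of_categoryTheory_projective _
  have hle : extDeg R (ModuleCat.of R (M' × R)) ≤ (n + (r + 1) : ℕ) := by
    rw [extDeg_le_iff]
    intro i hi
    exact (SACProof.V_pr_left (M := M') (N := ModuleCat.of R R)).2
      ⟨SACProof.V_pr_right.2 ⟨c i hi, b i (by omega)⟩, SACProof.V_proj hproj (by omega)⟩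
  have hge : ¬ extDeg R (ModuleCat.of R (M' × R)) ≤ (r : ℕ) := by
    rw [extDeg_le_iff]
    intro hh
    exact e ((SACProof.V_pr_right (M := M') (N := ModuleCat.of R R)).1 ((SACProof.V_pr_left (M := M') (N := ModuleCat.of R R)).1
      (hh (n + (r+1)) (by omega))).1).1
  apply hge
  rw [hr]
  exact le_sSup ⟨M', a, lt_of_le_of_lt hle (ENat.natCast_lt_top _), rfl⟩

/-- For a Noetherian ring `R` of finite Krull dimension: `R` satisfies (SAC) iff
`rfed R < ∞` iff `rfed R ≤ dim R`. -/
theorem stmt_19 (R : Type) [CommRing R] [IsNoetherianRing R] [Nontrivial R]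
    (hdim : ringKrullDim R < ⊤) :
    (SAC R ↔ rfed R < ⊤) ∧ (SAC R ↔ ((rfed R : WithBot ℕ∞) ≤ ringKrullDim R)) := by
  obtain ⟨d, hd⟩ : ∃ d : ℕ, ringKrullDim R = d := by
    have h0 : (0 : WithBot ℕ∞) ≤ ringKrullDim R := ringKrullDim_nonneg_of_nontrivial
    generalize ringKrullDim R = x at hdim h0
    induction x with
    | bot => simp at h0
    | coe x =>
      induction x with
      | top => simp at hdim
      | coe n => exact ⟨n, rfl⟩
  have key : SAC R → rfed R ≤ d := fun h => rfed_le_of_SAC R h d hd.le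
  refine ⟨⟨fun h => (key h).trans_lt (ENat.natCast_lt_top d), SAC_of_rfed R⟩, fun h => ?_, fun h => ?_⟩
  · rw [hd]
    exact_mod_cast key h
  · apply SAC_of_rfed
    rw [hd] at h
    have h' : rfed R ≤ d := by exact_mod_cast h
    exact h'.trans_lt (ENat.natCast_lt_top d)
end
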